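/- arXiv:2008.10113 — 3 statements merged into one kernel-verified Lean document; each statement's English description precedes it below -/
import Mathlib

section
/- Let $F$ be a dyadic local field with $e = \mathrm{ord}(2)$. If $a \in F^\times$ is not a square, then there exists $b \in F^\times$ with $d(b) = 2e - d(a)$ such that $(a,b)_{\mathfrak{p}} = -1$. Moreover, if $d(a) < 2e$, then $b$ can be chosen to be a unit of $\mathcal{O}$. -/
noncomputable section

/-- A normalized additive `ℤ`-valued valuation presenting `F` as a dyadic local field
(`F` is a finite extension of `ℚ₂` and `ord` its normalized valuation). -/
structure IsDyadicOrd {F : Type*} [Field F] [Algebra ℚ_[2] F] (ord : F → WithTop ℤ) : Prop where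
  map_zero : ord 0 = ⊤
  ne_top : ∀ x : F, x ≠ 0 → ord x ≠ ⊤
  map_mul : ∀ x y : F, ord (x * y) = ord x + ord y
  min_le_add : ∀ x y : F, min (ord x) (ord y) ≤ ord (x + y)
  surj : ∀ n : ℤ, ∃ x : F, ord x = (n : WithTop ℤ)
  compat : ∀ q : ℚ_[2], q ≠ 0 → q.valuation = 0 → ord (algebraMap ℚ_[2] F q) = 0

/-- The order of the relative quadratic defect `d(a) = ord (a⁻¹ 𝔡(a))`, where
`𝔡(a) = ⋂ₓ (a - x²)𝒪` is the quadratic defect; it is valued in `ℕ∞`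
(`d(a) ≥ 0` always, and `d(a) = ⊤` iff `𝔡(a) = 0`, i.e. `a` is a square). -/
def ddefect {F : Type*} [Field F] (ord : F → WithTop ℤ) (a : F) : ℕ∞ :=
  ⨆ x : F, WithTop.map Int.toNat (ord (a⁻¹ * (a - x ^ 2)))

/-- `d(a)` viewed in `WithTop ℤ`. -/
def dz {F : Type*} [Field F] (ord : F → WithTop ℤ) (a : F) : WithTop ℤ :=
  WithTop.map (Nat.cast : ℕ → ℤ) (ddefect ord a)

/-- The Hilbert symbol `(a,b)_𝔭 = 1` iff `z² = a x² + b y²` has a nontrivial solution. -/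
def hilbertSym (F : Type*) [Field F] (a b : F) : ℤ :=
  @ite _ (∃ x y z : F, (x, y, z) ≠ (0, 0, 0) ∧ a * x ^ 2 + b * y ^ 2 = z ^ 2)
    (Classical.propDecidable _) 1 (-1)

set_option linter.unusedSectionVars false

/-- `ord x ≥ n`. -/
def GE {F : Type*} (ord : F → WithTop ℤ) (n : ℤ) (x : F) : Prop := (n : WithTop ℤ) ≤ ord x

/-- `ord x = n`. -/
def EQ {F : Type*} (ord : F → WithTop ℤ) (n : ℤ) (x : F) : Prop := ord x = (n : WithTop ℤ)

section basic

variable {F : Type*} [Field F] [Algebra ℚ_[2] F] {ord : F → WithTop ℤ}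

theorem EQ.ge {n : ℤ} {x : F} (h : EQ ord n x) : GE ord n x := by
  unfold GE; unfold EQ at h; rw [h]

theorem GE.mono {n m : ℤ} {x : F} (h : GE ord n x) (hm : m ≤ n) : GE ord m x :=
  le_trans (by exact_mod_cast hm) h

theorem EQ.le {n m : ℤ} {x : F} (h : EQ ord n x) (h' : GE ord m x) : m ≤ n := by
  unfold GE at h'; unfold EQ at h; rw [h] at h'; exact_mod_cast h'

theorem EQ.uniq {n m : ℤ} {x : F} (h : EQ ord n x) (h' : EQ ord m x) : m = n :=
  le_antisymm (h.le h'.ge) (h'.le h.ge)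

theorem GE.eq_of_not {n : ℤ} {x : F} (h : GE ord n x) (h' : ¬ GE ord (n + 1) x) :
    EQ ord n x := by
  unfold GE at *; unfold EQ
  cases hx : ord x with
  | top => rw [hx] at h'; simp at h'
  | coe k =>
    rw [hx] at h h'
    have h1 : n ≤ k := by exact_mod_cast h
    have h2 : ¬ (n + 1 ≤ k) := fun hh => h' (by exact_mod_cast hh)
    have : k = n := by omega
    rw [this]

theorem ge_zero (hv : IsDyadicOrd ord) (n : ℤ) : GE ord n (0 : F) := by
  unfold GE; rw [hv.map_zero]; exact le_top

theorem exists_ordEq (hv : IsDyadicOrd ord) {x : F} (hx : x ≠ 0) : ∃ n : ℤ, EQ ord n x := by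
  have h := hv.ne_top x hx
  obtain ⟨n, hn⟩ := WithTop.ne_top_iff_exists.mp h
  exact ⟨n, hn.symm⟩

theorem EQ.ne_zero (hv : IsDyadicOrd ord) {n : ℤ} {x : F} (h : EQ ord n x) : x ≠ 0 := by
  rintro rfl
  unfold EQ at h
  rw [hv.map_zero] at h
  exact WithTop.top_ne_coe h

theorem EQ.mul (hv : IsDyadicOrd ord) {n m : ℤ} {x y : F} (h : EQ ord n x) (h' : EQ ord m y) :
    EQ ord (n + m) (x * y) := by
  unfold EQ at *; rw [hv.map_mul, h, h']; norm_cast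

theorem GE.mul (hv : IsDyadicOrd ord) {n m : ℤ} {x y : F} (h : GE ord n x) (h' : GE ord m y) :
    GE ord (n + m) (x * y) := by
  unfold GE at *; rw [hv.map_mul]; push_cast; exact add_le_add h h'

theorem eq_one (hv : IsDyadicOrd ord) : EQ ord 0 (1 : F) := by
  obtain ⟨n, hn⟩ := exists_ordEq hv (one_ne_zero (α := F))
  have h := hn.mul hv hn
  rw [one_mul] at h
  have := h.uniq hn
  have : n = 0 := by omega
  rwa [this] at hn

theorem eq_neg_one (hv : IsDyadicOrd ord) : EQ ord 0 (-1 : F) := by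
  obtain ⟨n, hn⟩ := exists_ordEq hv (neg_ne_zero.mpr (one_ne_zero (α := F)))
  have h := hn.mul hv hn
  rw [neg_mul_neg, one_mul] at h
  have := h.uniq (eq_one hv)
  have : n = 0 := by omega
  rwa [this] at hn

theorem EQ.neg (hv : IsDyadicOrd ord) {n : ℤ} {x : F} (h : EQ ord n x) : EQ ord n (-x) := by
  have := (eq_neg_one hv).mul hv h
  simpa using this

theorem GE.neg (hv : IsDyadicOrd ord) {n : ℤ} {x : F} (h : GE ord n x) : GE ord n (-x) := by
  have := (eq_neg_one hv).ge.mul hv h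
  simpa using this

theorem GE.add (hv : IsDyadicOrd ord) {n : ℤ} {x y : F} (h : GE ord n x) (h' : GE ord n y) :
    GE ord n (x + y) :=
  le_trans (le_min h h') (hv.min_le_add x y)

theorem GE.sub (hv : IsDyadicOrd ord) {n : ℤ} {x y : F} (h : GE ord n x) (h' : GE ord n y) :
    GE ord n (x - y) := by
  rw [sub_eq_add_neg]; exact h.add hv (h'.neg hv)

theorem EQ.add (hv : IsDyadicOrd ord) {n : ℤ} {x y : F} (h : EQ ord n x)
    (h' : GE ord (n + 1) y) : EQ ord n (x + y) := by
  apply (h.ge.add hv (h'.mono (by omega))).eq_of_not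
  intro hh
  have := hh.sub hv h'
  rw [add_sub_cancel_right] at this
  have := h.le this
  omega

theorem EQ.inv (hv : IsDyadicOrd ord) {n : ℤ} {x : F} (h : EQ ord n x) : EQ ord (-n) x⁻¹ := by
  have hx := h.ne_zero hv
  obtain ⟨m, hm⟩ := exists_ordEq hv (inv_ne_zero hx)
  have := h.mul hv hm
  rw [mul_inv_cancel₀ hx] at this
  have := this.uniq (eq_one hv)
  have : m = -n := by omega
  rwa [this] at hm

theorem EQ.sq (hv : IsDyadicOrd ord) {n : ℤ} {x : F} (h : EQ ord n x) : EQ ord (2 * n) (x ^ 2) := by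
  rw [pow_two, two_mul]; exact h.mul hv h

theorem GE.sq (hv : IsDyadicOrd ord) {n : ℤ} {x : F} (h : GE ord n x) : GE ord (2 * n) (x ^ 2) := by
  rw [pow_two, two_mul]; exact h.mul hv h

theorem GE.cases {n : ℤ} {x : F} (h : GE ord n x) : EQ ord n x ∨ GE ord (n + 1) x := by
  by_cases hh : GE ord (n + 1) x
  · exact Or.inr hh
  · exact Or.inl (h.eq_of_not hh)


/-- `ρ` is such that `s² - s + ρ` is a unit for all integral `s`. -/
def Rho (ord : F → WithTop ℤ) (ρ : F) : Prop := ∀ s, GE ord 0 s → EQ ord 0 (s ^ 2 - s + ρ)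

theorem Rho.eq (hv : IsDyadicOrd ord) {ρ : F} (h : Rho ord ρ) : EQ ord 0 ρ := by
  have := h 0 (ge_zero hv 0)
  simpa using this

theorem norm_form (hv : IsDyadicOrd ord) {ρ : F} (h : Rho ord ρ) (u v : F)
    (huv : ¬ (u = 0 ∧ v = 0)) :
    ∃ M : ℤ, EQ ord (2 * M) (u ^ 2 - u * v + ρ * v ^ 2) ∧ GE ord M u ∧ GE ord M v := by
  have key1 : ∀ m : ℤ, EQ ord m v → GE ord m u →
      EQ ord (2 * m) (u ^ 2 - u * v + ρ * v ^ 2) := by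
    intro m hm hu
    have hv0 := hm.ne_zero hv
    have h1 := hu.mul hv (hm.inv hv).ge
    have h2 := (hm.sq hv).mul hv (h (u * v⁻¹) (h1.mono (by omega)))
    have e1 : v ^ 2 * ((u * v⁻¹) ^ 2 - u * v⁻¹ + ρ) = u ^ 2 - u * v + ρ * v ^ 2 := by
      field_simp
    rw [e1] at h2
    simpa using h2
  have key2 : ∀ m : ℤ, EQ ord m u → GE ord (m + 1) v →
      EQ ord (2 * m) (u ^ 2 - u * v + ρ * v ^ 2) := by
    intro m hm hu
    have e1 : u ^ 2 - u * v + ρ * v ^ 2 = u ^ 2 + (ρ * v ^ 2 - u * v) := by ring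
    rw [e1]
    refine (hm.sq hv).add hv (GE.sub hv ?_ ?_)
    · exact ((h.eq hv).ge.mul hv (hu.sq hv)).mono (by omega)
    · exact (hm.ge.mul hv hu).mono (by omega)
  by_cases hv0 : v = 0
  · have hu0 : u ≠ 0 := fun h => huv ⟨h, hv0⟩
    obtain ⟨m, hm⟩ := exists_ordEq hv hu0
    refine ⟨m, key2 m hm ?_, hm.ge, ?_⟩ <;> rw [hv0] <;> exact ge_zero hv _
  · obtain ⟨m, hm⟩ := exists_ordEq hv hv0
    by_cases hu : GE ord m u
    · exact ⟨m, key1 m hm hu, hu, hm.ge⟩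
    · have hu0 : u ≠ 0 := by rintro rfl; exact hu (ge_zero hv _)
      obtain ⟨k, hk⟩ := exists_ordEq hv hu0
      have hkm : k < m := by
        by_contra hh
        exact hu (hk.ge.mono (by omega))
      exact ⟨k, key2 k hk (hm.ge.mono (by omega)), hk.ge, hm.ge.mono (by omega)⟩

/-- `z² = a x² + b y²` has only the trivial solution. -/
def Aniso (a b : F) : Prop := ∀ x y z : F, a * x ^ 2 + b * y ^ 2 = z ^ 2 → x = 0 ∧ y = 0 ∧ z = 0

theorem Aniso.hilbert {a b : F} (h : Aniso a b) : hilbertSym F a b = -1 := by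
  unfold hilbertSym
  rw [if_neg]
  rintro ⟨x, y, z, hne, heq⟩
  obtain ⟨rfl, rfl, rfl⟩ := h x y z heq
  exact hne rfl

theorem Aniso.symm {a b : F} (h : Aniso a b) : Aniso b a := by
  intro x y z hh
  obtain ⟨h1, h2, h3⟩ := h y x z (by rw [← hh]; ring)
  exact ⟨h2, h1, h3⟩

theorem Aniso.sq_mul {a b c : F} (hc : c ≠ 0) (h : Aniso a b) : Aniso (c ^ 2 * a) b := by
  intro x y z hh
  obtain ⟨h1, h2, h3⟩ := h (c * x) y z (by rw [← hh]; ring)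
  exact ⟨(mul_eq_zero.mp h1).resolve_left hc, h2, h3⟩

theorem eq_two_ne (hv : IsDyadicOrd ord) {e : ℤ} (he : EQ ord e (2 : F)) : (2 : F) ≠ 0 :=
  he.ne_zero hv

theorem aniso_delta (hv : IsDyadicOrd ord) {e : ℤ} (he : EQ ord e (2 : F)) {ρ : F}
    (h : Rho ord ρ) {a : F} {n : ℤ} (ha : EQ ord n a) (hn : Odd n) :
    Aniso a (1 - 4 * ρ) := by
  intro x y z hh
  have e1 : (z + y) ^ 2 - (z + y) * (2 * y) + ρ * (2 * y) ^ 2 = a * x ^ 2 := by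
    linear_combination -hh
  have h2 := he.ne_zero hv
  by_cases h0 : z + y = 0 ∧ 2 * y = 0
  · obtain ⟨h3, h4⟩ := h0
    have hy : y = 0 := (mul_eq_zero.mp h4).resolve_left h2
    subst hy
    have hz : z = 0 := by simpa using h3
    subst hz
    have ha0 := ha.ne_zero hv
    refine ⟨?_, rfl, rfl⟩
    simpa [ha0] using hh
  · exfalso
    obtain ⟨M, hM, -, -⟩ := norm_form hv h _ _ h0
    rw [e1] at hM
    have hx : x ≠ 0 := by
      rintro rfl
      apply hM.ne_zero hv; simp
    obtain ⟨k, hk⟩ := exists_ordEq hv hx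
    have := (ha.mul hv (hk.sq hv)).uniq hM
    obtain ⟨t, ht⟩ := hn
    omega

theorem aniso_mid (hv : IsDyadicOrd ord) {e : ℤ} (he : EQ ord e (2 : F)) {ρ : F}
    (h : Rho ord ρ) {α β : F} {m : ℤ} (hα : EQ ord m α) (hβ : EQ ord (2 * e - m) β)
    (hm : Odd m) (hm0 : 0 < m) (hme : m < 2 * e) (hab : α * β = 4 * ρ) :
    Aniso (1 + α) (1 + β) := by
  intro x y z hh
  have h2 := he.ne_zero hv
  have hβ0 := hβ.ne_zero hv
  obtain ⟨w, hw⟩ : ∃ w, z = x + y + w := ⟨z - x - y, by ring⟩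
  have e1 : (β * y) ^ 2 - (β * y) * (2 * x) + ρ * (2 * x) ^ 2 = β * (w * (w + 2 * (x + y))) := by
    subst hw
    linear_combination β * hh - x ^ 2 * hab
  by_cases h0 : β * y = 0 ∧ 2 * x = 0
  · obtain ⟨h3, h4⟩ := h0
    have hx : x = 0 := (mul_eq_zero.mp h4).resolve_left h2
    have hy : y = 0 := (mul_eq_zero.mp h3).resolve_left hβ0
    subst hx hy
    refine ⟨rfl, rfl, ?_⟩
    have : z ^ 2 = 0 := by rw [← hh]; ring
    simpa using this
  · exfalso
    obtain ⟨M, hM, hMy, hMx⟩ := norm_form hv h _ _ h0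
    rw [e1] at hM
    have hR := hM.ne_zero hv
    have hw0 : w ≠ 0 := by rintro rfl; apply hR; ring
    have hq0 : w + 2 * (x + y) ≠ 0 := by intro hq; apply hR; rw [hq]; ring
    obtain ⟨k, hk⟩ := exists_ordEq hv hw0
    obtain ⟨l, hl⟩ := exists_ordEq hv hq0
    have hsum := hM.uniq (hβ.mul hv (hk.mul hv hl))
    obtain ⟨t, ht⟩ := hm
    have main : ∀ μ : ℤ, GE ord μ x → GE ord μ y → e + μ ≤ k ∧ e + μ ≤ l := by
      intro μ hx hy
      have hxy := he.ge.mul hv (hx.add hv hy)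
      have hk' : e + μ ≤ k := by
        by_contra hlt
        have := hl.uniq (hk.add hv (hxy.mono (by omega)))
        omega
      exact ⟨hk', hl.le ((hk.ge.mono hk').add hv hxy)⟩
    have hcase1 : ∀ i : ℤ, EQ ord i x → GE ord i y → False := by
      intro i hi hj
      have h3 := (he.mul hv hi).le hMx
      have h4 := main i hi.ge hj
      omega
    have hcase2 : ∀ i : ℤ, EQ ord i y → GE ord i x → False := by
      intro i hi hj
      have h3 := (hβ.mul hv hi).le hMy
      have h4 := main i hj hi.ge
      omega
    by_cases hx : x = 0
    · have hy : y ≠ 0 := by rintro rfl; apply h0; simp [hx]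
      obtain ⟨j, hj⟩ := exists_ordEq hv hy
      exact hcase2 j hj (by rw [hx]; exact ge_zero hv _)
    · obtain ⟨i, hi⟩ := exists_ordEq hv hx
      by_cases hy : y = 0
      · exact hcase1 i hi (by rw [hy]; exact ge_zero hv _)
      · obtain ⟨j, hj⟩ := exists_ordEq hv hy
        rcases le_total i j with hij | hij
        · exact hcase1 i hi (hj.ge.mono hij)
        · exact hcase2 j hj (hi.ge.mono hij)


theorem ddefect_eq {c : F} (n : ℕ) (h1 : ∀ x, ∃ k : ℤ, EQ ord k (c⁻¹ * (c - x ^ 2)) ∧ k ≤ n)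
    (h2 : ∃ x, EQ ord n (c⁻¹ * (c - x ^ 2))) : ddefect ord c = (n : ℕ∞) := by
  unfold ddefect
  apply le_antisymm
  · apply iSup_le
    intro x
    obtain ⟨k, hk, hkn⟩ := h1 x
    unfold EQ at hk
    rw [hk, WithTop.map_coe]
    have : k.toNat ≤ n := by omega
    exact WithTop.coe_le_coe.mpr this
  · obtain ⟨x, hx⟩ := h2
    refine le_trans ?_ (le_iSup _ x)
    unfold EQ at hx
    rw [hx, WithTop.map_coe]
    exact le_of_eq (by simp; rfl)

theorem ddefect_eq_unit (hv : IsDyadicOrd ord) {c : F} (hc : EQ ord 0 c) (n : ℕ)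
    (h1 : ∀ x, ∃ k : ℤ, EQ ord k (c - x ^ 2) ∧ k ≤ n)
    (h2 : ∃ x, EQ ord n (c - x ^ 2)) : ddefect ord c = (n : ℕ∞) := by
  have key : ∀ k : ℤ, ∀ y : F, EQ ord k y → EQ ord k (c⁻¹ * y) := by
    intro k y hy
    have := (hc.inv hv).mul hv hy
    simpa using this
  refine ddefect_eq n ?_ ?_
  · intro x
    obtain ⟨k, hk, hkn⟩ := h1 x
    exact ⟨k, key _ _ hk, hkn⟩
  · obtain ⟨x, hx⟩ := h2
    exact ⟨x, key _ _ hx⟩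

theorem ddefect_odd (hv : IsDyadicOrd ord) {c : F} {n : ℤ} (hc : EQ ord n c) (hn : Odd n) :
    ddefect ord c = 0 := by
  have hc0 := hc.ne_zero hv
  refine ddefect_eq 0 ?_ ⟨0, by simpa [hc0] using eq_one hv⟩
  intro x
  by_cases hx : x = 0
  · subst hx
    exact ⟨0, by simpa [hc0] using eq_one hv, by simp⟩
  · obtain ⟨k, hk⟩ := exists_ordEq hv hx
    have h1 := (((hc.inv hv).mul hv (hk.sq hv)).neg hv)
    have e1 : c⁻¹ * (c - x ^ 2) = 1 + -(c⁻¹ * x ^ 2) := by field_simp; ring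
    obtain ⟨t, ht⟩ := hn
    rw [e1]
    by_cases hlt : 0 < -n + 2 * k
    · exact ⟨0, (eq_one hv).add hv (h1.ge.mono (by omega)), by simp⟩
    · refine ⟨-n + 2 * k, ?_, by push_cast; omega⟩
      rw [add_comm (1 : F)]
      exact h1.add hv ((eq_one hv).ge.mono (by omega))

theorem eq_one_add (hv : IsDyadicOrd ord) {β : F} (h : GE ord 1 β) : EQ ord 0 (1 + β) :=
  (eq_one hv).add hv (by simpa using h)

theorem ddefect_mid (hv : IsDyadicOrd ord) {e : ℤ} (he : EQ ord e (2 : F)) {β : F} {m : ℕ}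
    (hβ : EQ ord m β) (hm : Odd (m : ℤ)) (hme : (m : ℤ) < 2 * e) : ddefect ord (1 + β) = m := by
  obtain ⟨t, ht⟩ := hm
  refine ddefect_eq_unit hv (eq_one_add hv (hβ.ge.mono (by omega))) m ?_ ⟨1, by simpa using hβ⟩
  intro x
  have big : ∀ y, GE ord (m + 1) y → 1 + β - x ^ 2 = β + y →
      ∃ k : ℤ, EQ ord k (1 + β - x ^ 2) ∧ k ≤ m := by
    intro y hy hxy
    rw [hxy]
    exact ⟨m, hβ.add hv hy, le_rfl⟩
  have e1 : 1 + β - x ^ 2 = β + -((x - 1) * ((x - 1) + 2)) := by ring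
  by_cases hx : GE ord e (x - 1)
  · refine big _ ?_ e1
    exact ((hx.mul hv (hx.add hv he.ge)).neg hv).mono (by omega)
  · have hx0 : x - 1 ≠ 0 := by intro h; apply hx; rw [h]; exact ge_zero hv _
    obtain ⟨k, hk⟩ := exists_ordEq hv hx0
    have hke : k < e := by
      by_contra hh
      exact hx (hk.ge.mono (by omega))
    have h2 := (hk.mul hv (hk.add hv (he.ge.mono (by omega)))).neg hv
    by_cases hlt : (m : ℤ) < k + k
    · exact big _ (h2.ge.mono (by omega)) e1
    · rw [e1, add_comm]
      exact ⟨k + k, h2.add hv (hβ.ge.mono (by omega)), by omega⟩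

theorem eq_four (hv : IsDyadicOrd ord) {e : ℤ} (he : EQ ord e (2 : F)) : EQ ord (2 * e) (4 : F) := by
  have := he.sq hv
  norm_num at this
  exact this

theorem eq_delta (hv : IsDyadicOrd ord) {e : ℤ} (he : EQ ord e (2 : F)) (he0 : 0 < e) {ρ : F}
    (h : GE ord 0 ρ) : EQ ord 0 (1 - 4 * ρ) := by
  rw [sub_eq_add_neg]
  exact eq_one_add hv ((((eq_four hv he).ge.mul hv h).neg hv).mono (by omega))

theorem ddefect_delta (hv : IsDyadicOrd ord) {e : ℕ} (he : EQ ord e (2 : F)) (he0 : 0 < e) {ρ : F}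
    (h : Rho ord ρ) : ddefect ord (1 - 4 * ρ) = (2 * e : ℕ∞) := by
  have h2 := he.ne_zero hv
  have := ddefect_eq_unit hv (eq_delta hv he (by omega) (h.eq hv).ge) (2 * e) ?_ ?_
  · rw [this]; push_cast; rfl
  · intro x
    obtain ⟨M, hM, -, hM2⟩ := norm_form hv h (x + 1) 2 (by simp [h2])
    refine ⟨2 * M, ?_, ?_⟩
    · have := hM.neg hv
      have e1 : -((x + 1) ^ 2 - (x + 1) * 2 + ρ * 2 ^ 2) = 1 - 4 * ρ - x ^ 2 := by ring
      rwa [e1] at this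
    · have := he.le hM2
      push_cast; omega
  · refine ⟨1, ?_⟩
    have := ((eq_four hv he).mul hv (h.eq hv)).neg hv
    have e1 : (1 - 4 * ρ - 1 ^ 2) = -(4 * ρ) := by ring
    rw [e1]; push_cast; simpa using this

theorem ddefect_sq_le {a c : F} (hc : c ≠ 0) : ddefect ord a ≤ ddefect ord (c ^ 2 * a) := by
  unfold ddefect
  apply iSup_le
  intro x
  refine le_trans (le_of_eq ?_) (le_iSup _ (c * x))
  congr 2
  by_cases ha : a = 0
  · simp [ha]
  · field_simp

theorem ddefect_sq {a c : F} (hc : c ≠ 0) : ddefect ord (c ^ 2 * a) = ddefect ord a := by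
  apply le_antisymm _ (ddefect_sq_le hc)
  have := ddefect_sq_le (ord := ord) (a := c ^ 2 * a) (inv_ne_zero hc)
  have e1 : c⁻¹ ^ 2 * (c ^ 2 * a) = a := by field_simp
  rwa [e1] at this


theorem classify_unit (hv : IsDyadicOrd ord) {e : ℤ} (he : EQ ord e (2 : F)) (he0 : 0 < e)
    (hensel : ∀ ρ : F, GE ord 1 ρ → ∃ s, s ^ 2 - s + ρ = 0)
    (perf : ∀ u : F, GE ord 0 u → ∃ c, GE ord 0 c ∧ GE ord 1 (u - c ^ 2))
    (N : ℕ) : ∀ (α : F), GE ord (2 * e + 1 - N) α → GE ord 1 α → (¬ ∃ c : F, 1 + α = c ^ 2) →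
    (∃ c β : F, ∃ m : ℤ, c ≠ 0 ∧ 1 + α = c ^ 2 * (1 + β) ∧ EQ ord m β ∧ Odd m ∧ 0 < m ∧ m < 2 * e)
    ∨ (∃ c ρ : F, c ≠ 0 ∧ 1 + α = c ^ 2 * (1 - 4 * ρ) ∧ Rho ord ρ) := by
  have h2 := he.ne_zero hv
  have h4 : (4 : F) ≠ 0 := (eq_four hv he).ne_zero hv
  induction N with
  | zero =>
    intro α hα _ hns
    exfalso
    have h3 := (hα.neg hv).mul hv ((eq_four hv he).inv hv).ge
    obtain ⟨s, hs⟩ := hensel (-α * 4⁻¹) (h3.mono (by push_cast; omega))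
    apply hns
    refine ⟨1 - 2 * s, ?_⟩
    field_simp at hs
    linear_combination -hs
  | succ N ih =>
    intro α hα hα1 hns
    have improve : ∀ g : F, GE ord 1 g → GE ord (2 * e + 1 - N) (1 + α - (1 + g) ^ 2) →
        GE ord 1 (1 + α - (1 + g) ^ 2) →
        (∃ c β : F, ∃ m : ℤ, c ≠ 0 ∧ 1 + α = c ^ 2 * (1 + β) ∧ EQ ord m β ∧ Odd m ∧ 0 < m ∧ m < 2 * e)
        ∨ (∃ c ρ : F, c ≠ 0 ∧ 1 + α = c ^ 2 * (1 - 4 * ρ) ∧ Rho ord ρ) := by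
      intro g hg hN h1
      have hu := eq_one_add hv hg
      have hu0 := hu.ne_zero hv
      have hi := ((hu.inv hv).sq hv).ge
      have e1 : 1 + α = (1 + g) ^ 2 * (1 + (1 + g)⁻¹ ^ 2 * (1 + α - (1 + g) ^ 2)) := by
        field_simp; ring
      rcases ih ((1 + g)⁻¹ ^ 2 * (1 + α - (1 + g) ^ 2)) ((hi.mul hv hN).mono (by omega))
        ((hi.mul hv h1).mono (by omega)) (by
          rintro ⟨c, hc⟩
          exact hns ⟨(1 + g) * c, by rw [e1, hc]; ring⟩) with
        ⟨c, β, m, hc, heq, hr⟩ | ⟨c, ρ, hc, heq, hr⟩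
      · exact Or.inl ⟨(1 + g) * c, β, m, mul_ne_zero hu0 hc, by rw [e1, heq]; ring, hr⟩
      · exact Or.inr ⟨(1 + g) * c, ρ, mul_ne_zero hu0 hc, by rw [e1, heq]; ring, hr⟩
    rcases hα.cases with hE | hG
    swap
    · exact ih α (hG.mono (by push_cast; omega)) hα1 hns
    set n : ℤ := 2 * e + 1 - (N + 1 : ℕ) with hn
    have hnpos : 1 ≤ n := hE.le hα1
    by_cases hne : n = 2 * e
    · by_cases hR : Rho ord (-α * 4⁻¹)
      · exact Or.inr ⟨1, -α * 4⁻¹, one_ne_zero, by field_simp; ring, hR⟩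
      · unfold Rho at hR
        push Not at hR
        obtain ⟨s, hs, hs'⟩ := hR
        have h3 := ((hE.neg hv).mul hv ((eq_four hv he).inv hv)).ge
        have h5 : GE ord 0 (s ^ 2 - s + -α * 4⁻¹) :=
          (((hs.sq hv).mono (by omega)).sub hv hs).add hv (h3.mono (by omega))
        rcases h5.cases with h6 | h6
        · exact absurd h6 hs'
        · have h7 := ((eq_four hv he).ge.mul hv h6).neg hv
          have e2 : -(4 * (s ^ 2 - s + -α * 4⁻¹)) = 1 + α - (1 + (-(2 * s))) ^ 2 := by
            field_simp; ring
          rw [e2] at h7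
          exact improve _ (((he.ge.mul hv hs).neg hv).mono (by omega))
            (h7.mono (by push_cast at hn; omega)) (h7.mono (by omega))
    · have hnlt : n < 2 * e := by push_cast at hn; omega
      rcases Int.even_or_odd n with ⟨k, hk⟩ | hodd
      · obtain ⟨p, hp⟩ := hv.surj k
        have hp : EQ ord k p := hp
        have hp0 := hp.ne_zero hv
        have h3 := hE.mul hv ((hp.inv hv).sq hv)
        obtain ⟨c, hc, hc'⟩ := perf (α * p⁻¹ ^ 2) (h3.ge.mono (by omega))
        have h4 := (hp.sq hv).ge.mul hv hc'
        have h5 := (he.ge.mul hv (hp.ge.mul hv hc))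
        have h6 : GE ord (n + 1) (1 + α - (1 + p * c) ^ 2) := by
          have e2 : 1 + α - (1 + p * c) ^ 2 = p ^ 2 * (α * p⁻¹ ^ 2 - c ^ 2) - 2 * (p * c) := by
            field_simp; ring
          rw [e2]
          exact (h4.mono (by omega)).sub hv (h5.mono (by omega))
        exact improve _ ((hp.ge.mul hv hc).mono (by omega))
            (h6.mono (by push_cast at hn; omega)) (h6.mono (by omega))
      · exact Or.inl ⟨1, α, n, one_ne_zero, by ring, hE, hodd, by omega, hnlt⟩

theorem classify (hv : IsDyadicOrd ord) {e : ℤ} (he : EQ ord e (2 : F)) (he0 : 0 < e)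
    (hensel : ∀ ρ : F, GE ord 1 ρ → ∃ s, s ^ 2 - s + ρ = 0)
    (perf : ∀ u : F, GE ord 0 u → ∃ c, GE ord 0 c ∧ GE ord 1 (u - c ^ 2))
    (a : F) (ha : a ≠ 0) (hns : ¬ ∃ c : F, a = c ^ 2) :
    (∃ n, EQ ord n a ∧ Odd n) ∨
    (∃ c β : F, ∃ m : ℤ, c ≠ 0 ∧ a = c ^ 2 * (1 + β) ∧ EQ ord m β ∧ Odd m ∧ 0 < m ∧ m < 2 * e)
    ∨ (∃ c ρ : F, c ≠ 0 ∧ a = c ^ 2 * (1 - 4 * ρ) ∧ Rho ord ρ) := by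
  obtain ⟨n, hn⟩ := exists_ordEq hv ha
  rcases Int.even_or_odd n with ⟨k, hk⟩ | hodd
  swap
  · exact Or.inl ⟨n, hn, hodd⟩
  right
  obtain ⟨p, hp⟩ := hv.surj k
  have hp : EQ ord k p := hp
  have hp0 := hp.ne_zero hv
  have h3 := hn.mul hv ((hp.inv hv).sq hv)
  obtain ⟨c, hc, hc'⟩ := perf (a * p⁻¹ ^ 2) (h3.ge.mono (by omega))
  have hc1 : EQ ord 0 c := by
    apply hc.eq_of_not
    intro hh
    have h4 := hc'.add hv ((hh.sq hv).mono (by omega))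
    rw [sub_add_cancel] at h4
    have := h3.le h4
    omega
  have hc0 := hc1.ne_zero hv
  have h5 := ((hc1.inv hv).sq hv).ge.mul hv hc'
  have e1 : a = (p * c) ^ 2 * (1 + c⁻¹ ^ 2 * (a * p⁻¹ ^ 2 - c ^ 2)) := by
    field_simp; ring
  have hpc := mul_ne_zero hp0 hc0
  rcases classify_unit hv he he0 hensel perf (2 * e + 1).toNat (c⁻¹ ^ 2 * (a * p⁻¹ ^ 2 - c ^ 2))
    (h5.mono (by omega)) (h5.mono (by omega)) (by
      rintro ⟨d, hd⟩
      exact hns ⟨p * c * d, by rw [e1, hd]; ring⟩) with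
        ⟨d, β, m, hd, heq, hr⟩ | ⟨d, ρ, hd, heq, hr⟩
  · exact Or.inl ⟨p * c * d, β, m, mul_ne_zero hpc hd, by rw [e1, heq]; ring, hr⟩
  · exact Or.inr ⟨p * c * d, ρ, mul_ne_zero hpc hd, by rw [e1, heq]; ring, hr⟩

end basic

section top

variable {F : Type*} [Field F] [Algebra ℚ_[2] F] {ord : F → WithTop ℤ}

theorem EQ.npow (hv : IsDyadicOrd ord) {n : ℤ} {x : F} (h : EQ ord n x) (k : ℕ) :
    EQ ord (k * n) (x ^ k) := by
  induction k with
  | zero => simpa using eq_one hv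
  | succ k ih =>
    rw [pow_succ]
    have := ih.mul hv h
    have e1 : ((k + 1 : ℕ) : ℤ) * n = k * n + n := by push_cast; ring
    rwa [e1]

theorem EQ.zpow (hv : IsDyadicOrd ord) {n : ℤ} {x : F} (h : EQ ord n x) (k : ℤ) :
    EQ ord (k * n) (x ^ k) := by
  obtain ⟨k, rfl | rfl⟩ := k.eq_nat_or_neg
  · rw [zpow_natCast]; exact h.npow hv k
  · rw [zpow_neg, zpow_natCast, neg_mul]; exact (h.npow hv k).inv hv

theorem eq_algebraMap (hv : IsDyadicOrd ord) {e : ℤ} (he : EQ ord e (2 : F)) (q : ℚ_[2])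
    (hq : q ≠ 0) : EQ ord (q.valuation * e) (algebraMap ℚ_[2] F q) := by
  have h2 : (2 : ℚ_[2]) ≠ 0 := two_ne_zero
  have hval2 : (2 : ℚ_[2]).valuation = 1 := by
    have := Padic.valuation_p (p := 2)
    simpa using this
  set u : ℚ_[2] := q * (2 : ℚ_[2]) ^ (-q.valuation) with hu
  have hz : (2 : ℚ_[2]) ^ (-q.valuation) ≠ 0 := zpow_ne_zero _ h2
  have hu0 : u ≠ 0 := mul_ne_zero hq hz
  have huv : u.valuation = 0 := by
    rw [hu, Padic.valuation_mul hq hz, Padic.valuation_zpow, hval2]; ring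
  have h1 : EQ ord 0 (algebraMap ℚ_[2] F u) := hv.compat u hu0 huv
  have e1 : algebraMap ℚ_[2] F q = algebraMap ℚ_[2] F u * 2 ^ q.valuation := by
    have : q = u * 2 ^ q.valuation := by
      rw [hu, mul_assoc, ← zpow_add₀ h2]; simp
    conv_lhs => rw [this]
    rw [_root_.map_mul, map_zpow₀, map_ofNat]
  rw [e1]
  have := h1.mul hv (he.zpow hv q.valuation)
  simpa using this

theorem e_pos [FiniteDimensional ℚ_[2] F] (hv : IsDyadicOrd ord) {e : ℤ} (he : EQ ord e (2 : F)) :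
    0 < e := by
  have h0 : 0 ≤ e := by
    apply he.le
    have := (eq_one hv).ge.add hv (eq_one hv).ge
    norm_num at this
    exact this
  rcases h0.lt_or_eq with h | h
  · exact h
  exfalso
  subst h
  have hall : ∀ q : ℚ_[2], GE ord 0 (algebraMap ℚ_[2] F q) := by
    intro q
    by_cases hq : q = 0
    · rw [hq, _root_.map_zero]; exact ge_zero hv _
    · have := eq_algebraMap hv he q hq
      simpa using this.ge
  obtain ⟨x, hx⟩ := hv.surj (-1)
  have hx : EQ ord (-1) x := hx
  have hint : IsIntegral ℚ_[2] x := IsIntegral.of_finite _ _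
  have hm := minpoly.monic hint
  have hz := minpoly.aeval ℚ_[2] x
  set P := minpoly ℚ_[2] x
  rw [Polynomial.aeval_eq_sum_range, Finset.sum_range_succ, hm.coeff_natDegree, one_smul] at hz
  have hsum : ∀ s : Finset ℕ, (∀ i ∈ s, i < P.natDegree) →
      GE ord (-P.natDegree + 1) (∑ i ∈ s, P.coeff i • x ^ i) := by
    intro s
    induction s using Finset.induction_on with
    | empty => intro _; simpa using ge_zero hv _
    | insert i s his ih =>
      intro hs
      rw [Finset.sum_insert his]
      refine GE.add hv ?_ (ih (fun j hj => hs j (Finset.mem_insert_of_mem hj)))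
      rw [Algebra.smul_def]
      have hi := hs i (Finset.mem_insert_self _ _)
      exact ((hall _).mul hv (hx.npow hv i).ge).mono (by omega)
  have h1 := hsum (Finset.range P.natDegree) (by simp)
  have h2 := (hx.npow hv P.natDegree).add hv (h1.mono (by omega))
  rw [add_comm, hz] at h2
  exact h2.ne_zero hv rfl

open Classical in
/-- The absolute value attached to `ord`. -/
def onorm (ord : F → WithTop ℤ) (e : ℤ) (x : F) : ℝ :=
  if x = 0 then 0 else (2 : ℝ) ^ (-(((ord x).untopD 0 : ℤ) : ℝ) / e)

theorem onorm_eq (hv : IsDyadicOrd ord) {e n : ℤ} {x : F} (h : EQ ord n x) :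
    onorm ord e x = (2 : ℝ) ^ (-(n : ℝ) / e) := by
  unfold onorm
  rw [if_neg (h.ne_zero hv)]
  unfold EQ at h
  rw [h]; simp

theorem onorm_zero {e : ℤ} : onorm ord e (0 : F) = 0 := by simp [onorm]

theorem onorm_nonneg {e : ℤ} (x : F) : 0 ≤ onorm ord e x := by
  unfold onorm; split_ifs
  · exact le_rfl
  · positivity

theorem onorm_le_iff (hv : IsDyadicOrd ord) {e n : ℤ} (he : 0 < e) {x : F} :
    onorm ord e x ≤ (2 : ℝ) ^ (-(n : ℝ) / e) ↔ GE ord n x := by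
  have he' : (0 : ℝ) < e := by exact_mod_cast he
  by_cases hx : x = 0
  · subst hx
    rw [onorm_zero]
    exact ⟨fun _ => ge_zero hv _, fun _ => by positivity⟩
  · obtain ⟨k, hk⟩ := exists_ordEq hv hx
    rw [onorm_eq hv hk, Real.rpow_le_rpow_left_iff one_lt_two, div_le_div_iff_of_pos_right he',
      neg_le_neg_iff]
    norm_cast
    exact ⟨fun h => hk.ge.mono h, fun h => hk.le h⟩

theorem onorm_mul (hv : IsDyadicOrd ord) {e : ℤ} (x y : F) :
    onorm ord e (x * y) = onorm ord e x * onorm ord e y := by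
  by_cases hx : x = 0
  · simp [hx, onorm_zero]
  by_cases hy : y = 0
  · simp [hy, onorm_zero]
  obtain ⟨k, hk⟩ := exists_ordEq hv hx
  obtain ⟨l, hl⟩ := exists_ordEq hv hy
  rw [onorm_eq hv hk, onorm_eq hv hl, onorm_eq hv (hk.mul hv hl), ← Real.rpow_add two_pos]
  congr 1
  push_cast; ring

theorem onorm_add_le (hv : IsDyadicOrd ord) {e : ℤ} (he : 0 < e) (x y : F) :
    onorm ord e (x + y) ≤ onorm ord e x + onorm ord e y := by
  by_cases hx : x = 0
  · simp [hx, onorm_zero]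
  by_cases hy : y = 0
  · simp [hy, onorm_zero]
  obtain ⟨k, hk⟩ := exists_ordEq hv hx
  obtain ⟨l, hl⟩ := exists_ordEq hv hy
  rcases le_total k l with h | h
  · have := (onorm_le_iff hv he).mpr (hk.ge.add hv (hl.ge.mono h))
    rw [← onorm_eq hv hk] at this
    linarith [onorm_nonneg (ord := ord) (e := e) y]
  · have := (onorm_le_iff hv he).mpr ((hk.ge.mono h).add hv hl.ge)
    rw [← onorm_eq hv hl] at this
    linarith [onorm_nonneg (ord := ord) (e := e) x]

theorem onorm_neg (hv : IsDyadicOrd ord) {e : ℤ} (x : F) :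
    onorm ord e (-x) = onorm ord e x := by
  rw [← neg_one_mul, onorm_mul hv, onorm_eq hv (eq_neg_one hv)]
  simp

/-- The normed field structure. -/
abbrev oNormedField (hv : IsDyadicOrd ord) {e : ℤ} (he : 0 < e) : NormedField F :=
  { ‹Field F› with
    norm := onorm ord e
    dist := fun x y => onorm ord e (-x + y)
    dist_self := fun x => by simp [onorm_zero]
    dist_comm := fun x y => by rw [← onorm_neg hv]; congr 1; ring
    dist_triangle := fun x y z => by
      have := onorm_add_le hv he (-x + y) (-y + z)
      have e1 : -x + y + (-y + z) = -x + z := by ring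
      rwa [e1] at this
    eq_of_dist_eq_zero := fun {x y} h => by
      by_contra hne
      have h0 : -x + y ≠ 0 := fun h => hne (by linear_combination -h)
      obtain ⟨k, hk⟩ := exists_ordEq hv h0
      have h' : onorm ord e (-x + y) = 0 := h
      rw [onorm_eq hv hk] at h'
      have : (0 : ℝ) < (2 : ℝ) ^ (-(k : ℝ) / e) := by positivity
      linarith
    dist_eq := fun x y => rfl
    norm_mul := onorm_mul hv }

theorem onorm_algebraMap (hv : IsDyadicOrd ord) {e : ℤ} (he : EQ ord e (2 : F)) (he0 : 0 < e)
    (q : ℚ_[2]) : onorm ord e (algebraMap ℚ_[2] F q) = ‖q‖ := by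
  by_cases hq : q = 0
  · simp [hq, onorm_zero]
  · have he' : (e : ℝ) ≠ 0 := by exact_mod_cast he0.ne'
    rw [onorm_eq hv (eq_algebraMap hv he q hq), Padic.norm_eq_zpow_neg_valuation hq]
    push_cast
    rw [← Real.rpow_intCast]
    congr 1
    push_cast
    field_simp

theorem topo [FiniteDimensional ℚ_[2] F] (hv : IsDyadicOrd ord) {e : ℤ} (he : EQ ord e (2 : F))
    (he0 : 0 < e) :
    (∀ ρ : F, GE ord 1 ρ → ∃ s, s ^ 2 - s + ρ = 0) ∧
    (∃ T : Finset F, ∀ x : F, GE ord 0 x → ∃ t ∈ T, GE ord 1 (x - t)) := by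
  letI : NormedField F := oNormedField hv he0
  letI : NormedSpace ℚ_[2] F :=
    { norm_smul_le := fun q x => by
        rw [Algebra.smul_def]
        change onorm ord e _ ≤ _ * onorm ord e _
        rw [onorm_mul hv, onorm_algebraMap hv he he0] }
  haveI : ProperSpace F := FiniteDimensional.proper ℚ_[2] F
  have hball : ∀ n : ℤ, ∀ x : F, x ∈ Metric.closedBall (0 : F) ((2 : ℝ) ^ (-(n : ℝ) / e)) ↔
      GE ord n x := by
    intro n x
    rw [mem_closedBall_zero_iff]
    exact onorm_le_iff hv he0
  have hcpt : ∀ n : ℤ, IsCompact (Metric.closedBall (0 : F) ((2 : ℝ) ^ (-(n : ℝ) / e))) :=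
    fun n => isCompact_closedBall _ _
  constructor
  · intro ρ hρ
    obtain ⟨s, hs, hmin⟩ := (hcpt 1).exists_isMinOn ⟨0, (hball 1 0).mpr (ge_zero hv _)⟩
      (f := fun s : F => ‖s ^ 2 - s + ρ‖) (by fun_prop)
    rw [hball] at hs
    refine ⟨s, ?_⟩
    by_contra hne
    obtain ⟨k, hk⟩ := exists_ordEq hv hne
    set ε := s ^ 2 - s + ρ with hε
    have hε1 : GE ord 1 ε := (((hs.sq hv).mono (by omega)).sub hv hs).add hv hρ
    have h1 : s + ε ∈ Metric.closedBall (0 : F) ((2 : ℝ) ^ (-((1 : ℤ) : ℝ) / e)) :=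
      (hball 1 _).mpr (hs.add hv hε1)
    have h2 := hmin h1
    have e1 : (s + ε) ^ 2 - (s + ε) + ρ = ε * (2 * s + ε) := by
      rw [hε]; ring
    have h3 : onorm ord e ε ≤ onorm ord e (ε * (2 * s + ε)) := by
      rw [← e1]; exact h2
    have h4 : GE ord (k + 1) (ε * (2 * s + ε)) :=
      hk.ge.mul hv (((he.ge.mul hv hs).mono (by omega)).add hv hε1)
    have h5 := (onorm_le_iff hv he0).mp (h3.trans ((onorm_le_iff hv he0).mpr h4))
    have := hk.le h5
    omega
  · obtain ⟨t, -, hfin, hcov⟩ := (hcpt 0).finite_cover_balls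
      (e := (2 : ℝ) ^ (-((1 : ℤ) : ℝ) / e)) (by positivity)
    refine ⟨hfin.toFinset, fun x hx => ?_⟩
    have h1 := hcov ((hball 0 x).mpr hx)
    simp only [Set.mem_iUnion] at h1
    obtain ⟨i, hi, hxi⟩ := h1
    refine ⟨i, by simpa using hi, ?_⟩
    rw [Metric.mem_ball, dist_eq_norm] at hxi
    exact (onorm_le_iff hv he0).mp hxi.le

/-- The valuation ring. -/
def oRing (hv : IsDyadicOrd ord) : Subring F where
  carrier := {x | GE ord 0 x}
  mul_mem' := fun h h' => by simpa using h.mul hv h'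
  one_mem' := (eq_one hv).ge
  add_mem' := fun h h' => h.add hv h'
  zero_mem' := ge_zero hv 0
  neg_mem' := fun h => h.neg hv

/-- The maximal ideal. -/
def oIdeal (hv : IsDyadicOrd ord) : Ideal (oRing hv) where
  carrier := {x | GE ord 1 (x : F)}
  add_mem' := fun h h' => h.add hv h'
  zero_mem' := ge_zero hv 1
  smul_mem' := fun c x h => by
    have := GE.mul hv c.2 h
    simpa using this

theorem residue [FiniteDimensional ℚ_[2] F] (hv : IsDyadicOrd ord) {e : ℤ}
    (he : EQ ord e (2 : F)) (he0 : 0 < e) :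
    (∀ u : F, GE ord 0 u → ∃ c, GE ord 0 c ∧ GE ord 1 (u - c ^ 2)) ∧ (∃ ρ : F, Rho ord ρ) := by
  obtain ⟨T, hT⟩ := (topo hv he he0).2
  let K := oRing hv ⧸ oIdeal hv
  have hmk : ∀ x y : oRing hv, (Ideal.Quotient.mk (oIdeal hv) x = Ideal.Quotient.mk (oIdeal hv) y) ↔
      GE ord 1 ((x : F) - y) := by
    intro x y
    rw [Ideal.Quotient.eq]; rfl
  have hsurj : Function.Surjective (Ideal.Quotient.mk (oIdeal hv)) := Ideal.Quotient.mk_surjective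
  haveI : Finite K := by
    choose r hr using hsurj
    choose f hf hf' using fun k : K => hT (r k : F) (r k).2
    refine Finite.of_injective (fun k : K => (⟨f k, hf k⟩ : T)) ?_
    intro k l hkl
    have hkl : f k = f l := by simpa using hkl
    rw [← hr k, ← hr l, hmk]
    have := (hf' k).sub hv (hf' l)
    rw [hkl] at this
    simpa using this
  constructor
  · have hinj : Function.Injective (fun k : K => k ^ 2) := by
      intro k l hkl
      obtain ⟨x, rfl⟩ := hsurj k
      obtain ⟨y, rfl⟩ := hsurj l
      simp only [← _root_.map_pow] at hkl
      rw [hmk] at hkl ⊢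
      have hx : GE ord 0 (x : F) := x.2
      have hy : GE ord 0 (y : F) := y.2
      have h3 := (he.ge.mul hv (hy.mul hv (hx.sub hv hy))).mono (show (1 : ℤ) ≤ _ by omega)
      have h4 := hkl.sub hv h3
      have e1 : ((x ^ 2 : oRing hv) : F) - ((y ^ 2 : oRing hv) : F) - 2 * (y * (x - y)) =
        ((x : F) - y) ^ 2 := by push_cast; ring
      rw [e1] at h4
      rcases (hx.sub hv hy).cases with h5 | h5
      · have := (h5.sq hv).le h4
        omega
      · exact h5
    have hsq := Finite.surjective_of_injective hinj
    intro u hu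
    obtain ⟨k, hk⟩ := hsq (Ideal.Quotient.mk (oIdeal hv) ⟨u, hu⟩)
    obtain ⟨c, rfl⟩ := hsurj k
    simp only [← _root_.map_pow] at hk
    have := (hmk _ _).mp hk.symm
    exact ⟨c, c.2, by simpa using this⟩
  · have hninj : ¬ Function.Injective (fun k : K => k - k ^ 2) := by
      intro h
      have h01 : (0 : K) = 1 := h (by simp)
      have h1 : Ideal.Quotient.mk (oIdeal hv) 1 = Ideal.Quotient.mk (oIdeal hv) 0 := by
        rw [_root_.map_one, _root_.map_zero]; exact h01.symm
      rw [hmk] at h1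
      have := (eq_one hv).le (by simpa using h1)
      omega
    have hns : ¬ Function.Surjective (fun k : K => k - k ^ 2) :=
      fun h => hninj (Finite.injective_iff_surjective.mpr h)
    unfold Function.Surjective at hns
    push Not at hns
    obtain ⟨k, hk⟩ := hns
    obtain ⟨r, rfl⟩ := hsurj k
    refine ⟨r, fun s hs => ?_⟩
    have hr : GE ord 0 (r : F) := r.2
    refine ((((hs.sq hv).mono (by omega)).sub hv hs).add hv hr).eq_of_not ?_
    intro h
    apply hk (Ideal.Quotient.mk (oIdeal hv) ⟨s, hs⟩)
    rw [← _root_.map_pow, ← _root_.map_sub, hmk]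
    have := h.neg hv
    have e1 : -(s ^ 2 - s + (r : F)) = s - s ^ 2 - r := by ring
    rw [e1] at this
    simpa using this

end top

/-- for a nonsquare `a` there is `b` with `d(b) = 2e - d(a)` and `(a,b)_ℙ = -1`;
if moreover `d(a) < 2e` then `b` can be chosen a unit. -/
theorem stmt4 {F : Type*} [Field F] [Algebra ℚ_[2] F] [FiniteDimensional ℚ_[2] F]
    (ord : F → WithTop ℤ) (hv : IsDyadicOrd ord)
    (e : ℕ) (he : ord (2 : F) = ((e : ℤ) : WithTop ℤ))
    (a : F) (ha : a ≠ 0) (hns : ¬ ∃ c : F, a = c ^ 2) :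
    (∃ b : F, b ≠ 0 ∧ ddefect ord b = (2 * e : ℕ∞) - ddefect ord a ∧
      hilbertSym F a b = -1) ∧
    (ddefect ord a < (2 * e : ℕ∞) →
      ∃ b : F, ord b = 0 ∧ ddefect ord b = (2 * e : ℕ∞) - ddefect ord a ∧
        hilbertSym F a b = -1) := by
  have he1 : EQ ord (e : ℤ) (2 : F) := he
  have he0 : (0 : ℤ) < e := e_pos hv he1
  have he0' : 0 < e := by exact_mod_cast he0
  have hensel := (topo hv he1 he0).1
  obtain ⟨perf, ρ, hρ⟩ := residue hv he1 he0
  have hfour := eq_four hv he1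
  rcases classify hv he1 he0 hensel perf a ha hns with
    ⟨n, hn, hodd⟩ | ⟨c, α, m, hc, rfl, hα, hodd, hm0, hme⟩ | ⟨c, r, hc, rfl, hr⟩
  · have hu := eq_delta hv he1 he0 (hρ.eq hv).ge
    have hd : ddefect ord (1 - 4 * ρ) = (2 * e : ℕ∞) - ddefect ord a := by
      rw [ddefect_delta hv he1 he0' hρ, ddefect_odd hv hn hodd, tsub_zero]
    have hh := (aniso_delta hv he1 hρ hn hodd).hilbert
    exact ⟨⟨_, hu.ne_zero hv, hd, hh⟩, fun _ => ⟨_, hu, hd, hh⟩⟩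
  · obtain ⟨k, rfl⟩ := Int.eq_ofNat_of_zero_le hm0.le
    have hα0 := hα.ne_zero hv
    have hβ := (hfour.mul hv (hρ.eq hv)).mul hv (hα.inv hv)
    have hβ : EQ ord (2 * e - k) (4 * ρ * α⁻¹) := by
      have e1 : (2 * e - k : ℤ) = 2 * e + 0 + -k := by ring
      rwa [e1]
    have hβ' : EQ ord ((2 * e - k : ℕ) : ℤ) (4 * ρ * α⁻¹) := by
      have e1 : ((2 * e - k : ℕ) : ℤ) = 2 * e - k := by omega
      rwa [e1]
    have hu := eq_one_add hv (hβ.ge.mono (show (1 : ℤ) ≤ _ by omega))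
    have hd : ddefect ord (1 + 4 * ρ * α⁻¹) = (2 * e : ℕ∞) - ddefect ord (c ^ 2 * (1 + α)) := by
      rw [ddefect_sq hc, ddefect_mid hv he1 hα hodd hme, ddefect_mid hv he1 hβ' (by
        obtain ⟨t, ht⟩ := hodd
        exact ⟨e - t - 1, by omega⟩) (by omega)]
      push_cast; rfl
    have hh := ((aniso_mid hv he1 hρ hα hβ hodd hm0 hme (by field_simp)).sq_mul hc).hilbert
    exact ⟨⟨_, hu.ne_zero hv, hd, hh⟩, fun _ => ⟨_, hu, hd, hh⟩⟩
  · have hd := ddefect_sq (ord := ord) (a := 1 - 4 * r) hc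
    rw [ddefect_delta hv he1 he0' hr] at hd
    constructor
    · obtain ⟨p, hp⟩ := hv.surj 1
      have hp : EQ ord 1 p := hp
      refine ⟨p, hp.ne_zero hv, ?_, ?_⟩
      · rw [hd, ddefect_odd hv hp odd_one, tsub_self]
      · exact ((aniso_delta hv he1 hr hp odd_one).symm.sq_mul hc).hilbert
    · intro h
      rw [hd] at h
      exact absurd h (lt_irrefl _)
end
end

section
/- Let $F$ be a dyadic local field with $e = \mathrm{ord}(2)$, and let $a_1, a_2 \in F^\times$ with $\mathrm{ord}(a_1) = 0$ and $\mathrm{ord}(a_2) = -2e$, such that $-a_1 a_2$ has $d(-a_1a_2) \geq 2e$ (i.e. $-a_1a_2 \in (F^\times)^2 \cup \Delta(F^\times)^2$). Then: if $a_1 a_2 \in -(F^\times)^2$ the binary form $[a_1, a_2]$ is isotropic, and if $a_1 a_2 \in -\Delta (F^\times)^2$ then $[a_1, a_2]$ represents exactly the elements of $F^\times$ of even order. -/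
noncomputable section

section helpers

theorem aux_sub {K : Type*} [NormedField K] (hu : ∀ x y : K, ‖x + y‖ ≤ max ‖x‖ ‖y‖) (x y : K) :
    ‖x - y‖ ≤ max ‖x‖ ‖y‖ := by
  have := hu x (-y)
  rwa [norm_neg, ← sub_eq_add_neg] at this

theorem aux_frob {K : Type*} [NormedField K] (hu : ∀ x y : K, ‖x + y‖ ≤ max ‖x‖ ‖y‖)
    (h2 : ‖(2 : K)‖ < 1) (a b : K) (hb : ‖b‖ = 1) (h : ‖a ^ 2 - b ^ 2‖ < 1) :
    ‖a - b‖ < 1 := by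
  by_contra hcon
  push Not at hcon
  have e1 : a ^ 2 - b ^ 2 = (a - b) * (a - b) + 2 * b * (a - b) := by ring
  have e2 : (a - b) * (a - b) = (a ^ 2 - b ^ 2) - 2 * b * (a - b) := by ring
  have h3 := aux_sub hu (a ^ 2 - b ^ 2) (2 * b * (a - b))
  rw [← e2] at h3
  simp only [norm_mul, hb, mul_one] at h3
  rcases le_max_iff.1 h3 with h4 | h4 <;> nlinarith

theorem aux_frob_iter {K : Type*} [NormedField K] (hu : ∀ x y : K, ‖x + y‖ ≤ max ‖x‖ ‖y‖)
    (h2 : ‖(2 : K)‖ < 1) (n : ℕ) (a b : K) (hb : ‖b‖ = 1)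
    (h : ‖a ^ 2 ^ n - b ^ 2 ^ n‖ < 1) : ‖a - b‖ < 1 := by
  induction n with
  | zero => simpa using h
  | succ n ih =>
    apply ih
    apply aux_frob hu h2 _ _ (by simp [hb])
    rw [← pow_mul, ← pow_mul, ← pow_succ]
    exact h

theorem aux_sq {K : Type*} [NormedField K] [ProperSpace K]
    (hu : ∀ x y : K, ‖x + y‖ ≤ max ‖x‖ ‖y‖)
    (h2 : ‖(2 : K)‖ < 1) (ε : K) (hε : ‖ε‖ = 1) : ∃ x : K, ‖x‖ = 1 ∧ ‖ε - x ^ 2‖ < 1 := by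
  have hc : IsCompact (Metric.closedBall (0 : K) 1) := isCompact_closedBall _ _
  obtain ⟨a, -, φ, hφ, hlim⟩ := hc.tendsto_subseq (x := fun n => ε ^ 2 ^ n)
    (fun n => by simp [hε])
  have hcs := hlim.cauchySeq
  obtain ⟨N, hN⟩ := Metric.cauchySeq_iff.1 hcs 1 one_pos
  have h := hN (N + 1) (by omega) N le_rfl
  have hlt : φ N < φ (N + 1) := hφ (Nat.lt_succ_self N)
  obtain ⟨k, hk⟩ := Nat.exists_eq_add_of_lt hlt
  rw [dist_eq_norm] at h
  simp only [Function.comp] at h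
  refine ⟨ε ^ 2 ^ k, by simp [hε], ?_⟩
  rw [norm_sub_rev]
  apply aux_frob_iter hu h2 (φ N) _ _ hε
  have : ((ε ^ 2 ^ k) ^ 2) ^ 2 ^ φ N = ε ^ 2 ^ φ (N + 1) := by
    rw [← pow_mul, ← pow_mul, hk]
    congr 1
    ring
  rw [this]
  exact h

theorem aux_solve {K : Type*} [NormedField K] [ProperSpace K]
    (hu : ∀ x y : K, ‖x + y‖ ≤ max ‖x‖ ‖y‖)
    (h2 : ‖(2 : K)‖ < 1) (ε w ρ : K) (hε : ‖ε‖ = 1) (hw : ‖w‖ = 1) (hρ : ‖ρ‖ ≤ 1) :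
    ∃ x y : K, x ^ 2 + w * x * y - ρ * y ^ 2 = ε := by
  obtain ⟨x, hx, hs⟩ := aux_sq hu h2 ε hε
  set s : ℝ := ‖ε - x ^ 2‖ with hsdef
  have hs0 : 0 ≤ s := norm_nonneg _
  have hx0 : x ≠ 0 := by rintro rfl; simp at hx
  have hw0 : w ≠ 0 := by rintro rfl; simp at hw
  let T : K → K := fun y => (ε - x ^ 2 + ρ * y ^ 2) / (w * x)
  have hmaps : Set.MapsTo T (Metric.closedBall 0 s) (Metric.closedBall 0 s) := by
    intro y hy
    rw [mem_closedBall_zero_iff] at hy ⊢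
    simp only [T, norm_div, norm_mul, hw, hx, mul_one, div_one]
    refine (hu _ _).trans (max_le le_rfl ?_)
    rw [norm_mul, norm_pow]
    have := norm_nonneg y
    have := norm_nonneg ρ
    calc ‖ρ‖ * ‖y‖ ^ 2 ≤ 1 * ‖y‖ ^ 2 := by gcongr
      _ ≤ s := by nlinarith
  have hcontr : ContractingWith ⟨s, hs0⟩ (hmaps.restrict T _ _) := by
    refine ⟨by exact_mod_cast hs, ?_⟩
    apply LipschitzWith.of_dist_le_mul
    rintro ⟨y, hy⟩ ⟨z, hz⟩
    rw [mem_closedBall_zero_iff] at hy hz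
    change dist (T y) (T z) ≤ s * dist y z
    rw [dist_eq_norm, dist_eq_norm]
    have e1 : T y - T z = ρ * (y + z) * (y - z) / (w * x) := by
      simp only [T]; field_simp; ring
    rw [e1]
    simp only [norm_div, norm_mul, hw, hx, mul_one, div_one]
    have h3 : ‖y + z‖ ≤ s := (hu _ _).trans (max_le hy hz)
    have h4 : ‖ρ‖ * ‖y + z‖ ≤ 1 * s := by gcongr
    rw [one_mul] at h4
    gcongr
  obtain ⟨y, -, hy, -⟩ := hcontr.exists_fixedPoint' (Metric.isClosed_closedBall.isComplete) hmaps
    (x := 0) (by simpa using hs0) (by exact edist_ne_top _ _)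
  refine ⟨x, y, ?_⟩
  have : (ε - x ^ 2 + ρ * y ^ 2) / (w * x) = y := hy
  rw [div_eq_iff (mul_ne_zero hw0 hx0)] at this
  linear_combination -this

theorem aux_one {F : Type*} [Field F] [Algebra ℚ_[2] F] {ord : F → WithTop ℤ}
    (hv : IsDyadicOrd ord) : ord 1 = 0 := by
  have h := hv.map_mul 1 1
  have ht := hv.ne_top 1 one_ne_zero
  rw [mul_one] at h
  lift ord 1 to ℤ using ht with n
  norm_cast at h ⊢
  omega

/-- the additive valuation. -/
def auxVal {F : Type*} [Field F] [Algebra ℚ_[2] F] {ord : F → WithTop ℤ}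
    (hv : IsDyadicOrd ord) : AddValuation F (WithTop ℤ) :=
  AddValuation.of ord hv.map_zero (aux_one hv) hv.min_le_add hv.map_mul

theorem aux_Q2 {F : Type*} [Field F] [Algebra ℚ_[2] F] {ord : F → WithTop ℤ}
    (hv : IsDyadicOrd ord) (e : ℕ) (he : ord (2 : F) = ((e : ℤ) : WithTop ℤ))
    (q : ℚ_[2]) (hq : q ≠ 0) :
    ord (algebraMap ℚ_[2] F q) = ((e * q.valuation : ℤ) : WithTop ℤ) := by
  have h2 : (2 : ℚ_[2]) ≠ 0 := two_ne_zero
  have h2F : (2 : F) ≠ 0 := by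
    have := (map_ne_zero (algebraMap ℚ_[2] F)).2 h2
    rwa [map_ofNat] at this
  have hz : ∀ n : ℤ, ord ((2 : F) ^ n) = ((e * n : ℤ) : WithTop ℤ) := by
    have hn : ∀ n : ℕ, ord ((2 : F) ^ n) = ((e * n : ℤ) : WithTop ℤ) := by
      intro n
      induction n with
      | zero => simp [aux_one hv]
      | succ n ih =>
        rw [pow_succ, hv.map_mul, ih, he]
        norm_cast
    intro n
    obtain ⟨k, rfl | rfl⟩ := n.eq_nat_or_neg
    · simpa using hn k
    · have h := hv.map_mul ((2 : F) ^ k) ((2 : F) ^ (-(k : ℤ)))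
      rw [zpow_neg, zpow_natCast, mul_inv_cancel₀ (pow_ne_zero _ h2F), aux_one hv, hn] at h
      rw [zpow_neg, zpow_natCast]
      have ht := hv.ne_top (((2 : F) ^ k)⁻¹) (inv_ne_zero (pow_ne_zero _ h2F))
      lift ord (((2 : F) ^ k)⁻¹) to ℤ using ht with m
      norm_cast at h ⊢
      push_cast at h ⊢
      linarith
  have hval : (q * (2 : ℚ_[2]) ^ (-q.valuation)).valuation = 0 := by
    have h2v : (2 : ℚ_[2]).valuation = 1 := by
      have := Padic.valuation_p (p := 2)
      simpa using this
    rw [Padic.valuation_mul hq (zpow_ne_zero _ h2), Padic.valuation_zpow, h2v]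
    ring
  have hc := hv.compat _ (mul_ne_zero hq (zpow_ne_zero _ h2)) hval
  have e1 : algebraMap ℚ_[2] F q =
      algebraMap ℚ_[2] F (q * (2 : ℚ_[2]) ^ (-q.valuation)) * (2 : F) ^ q.valuation := by
    rw [map_mul, map_zpow₀, map_ofNat, mul_assoc, ← zpow_add₀ h2F]
    simp
  rw [e1, hv.map_mul, hc, hz, zero_add]

theorem aux_e_pos {F : Type*} [Field F] [Algebra ℚ_[2] F] [FiniteDimensional ℚ_[2] F]
    {ord : F → WithTop ℤ}
    (hv : IsDyadicOrd ord) (e : ℕ) (he : ord (2 : F) = ((e : ℤ) : WithTop ℤ)) : 0 < e := by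
  by_contra hcon
  have h0 : e = 0 := by omega
  subst h0
  obtain ⟨x, hx⟩ := hv.surj (-1)
  let v := auxVal hv
  have hxv : v x = ((-1 : ℤ) : WithTop ℤ) := hx
  obtain ⟨p, hp, hpx⟩ := Algebra.IsIntegral.isIntegral (R := ℚ_[2]) x
  have hn : p.natDegree ≠ 0 := by
    intro h
    rw [hp.natDegree_eq_zero] at h
    simp [h] at hpx
  have hpw : ∀ n : ℕ, v (x ^ n) = ((-n : ℤ) : WithTop ℤ) := by
    intro n
    induction n with
    | zero => simp
    | succ n ih =>
      rw [pow_succ, v.map_mul, ih, hxv, ← WithTop.coe_add]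
      congr 1
      push_cast
      ring
  rw [Polynomial.eval₂_eq_sum_range, Finset.sum_range_succ, hp.coeff_natDegree, map_one,
    one_mul] at hpx
  have hs : ((-(p.natDegree : ℤ) : ℤ) : WithTop ℤ) <
      v (∑ i ∈ Finset.range p.natDegree, algebraMap ℚ_[2] F (p.coeff i) * x ^ i) := by
    apply v.map_lt_sum (WithTop.coe_ne_top)
    intro i hi
    rw [Finset.mem_range] at hi
    rw [v.map_mul, hpw]
    by_cases hci : p.coeff i = 0
    · rw [hci, map_zero, v.map_zero, top_add]
      exact WithTop.coe_lt_top _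
    · have := aux_Q2 hv 0 he _ hci
      rw [show v (algebraMap ℚ_[2] F (p.coeff i)) = _ from this]
      norm_cast
      push_cast
      omega
  rw [eq_neg_of_add_eq_zero_left hpx, v.map_neg, hpw] at hs
  exact lt_irrefl _ hs

open Classical in
/-- the norm function. -/
def auxNorm {F : Type*} [Field F] (ord : F → WithTop ℤ) (e : ℕ) (x : F) : ℝ :=
  if x = 0 then 0 else ((2 : ℝ) ^ ((e : ℝ)⁻¹)) ^ (-((ord x).untopD 0))

theorem aux_norm_le {F : Type*} [Field F] [Algebra ℚ_[2] F] {ord : F → WithTop ℤ}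
    (hv : IsDyadicOrd ord) (e : ℕ) (he : 0 < e) (x y : F) :
    auxNorm ord e x ≤ auxNorm ord e y ↔ ord y ≤ ord x := by
  have hr : 1 < (2 : ℝ) ^ ((e : ℝ)⁻¹) := Real.one_lt_rpow (by norm_num) (by positivity)
  unfold auxNorm
  by_cases hx : x = 0
  · subst hx
    simp only [if_true, hv.map_zero, le_top, iff_true]
    split_ifs <;> positivity
  · by_cases hy : y = 0
    · subst hy
      simp only [if_true, hv.map_zero, if_neg hx, top_le_iff, hv.ne_top x hx, iff_false]
      push Not
      positivity
    · rw [if_neg hx, if_neg hy]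
      have h1 := hv.ne_top x hx
      have h2 := hv.ne_top y hy
      lift ord x to ℤ using h1 with n
      lift ord y to ℤ using h2 with m
      rw [zpow_le_zpow_iff_right₀ hr]
      simp

/-- the absolute value. -/
def auxAbs {F : Type*} [Field F] [Algebra ℚ_[2] F] {ord : F → WithTop ℤ}
    (hv : IsDyadicOrd ord) (e : ℕ) (he : 0 < e) : AbsoluteValue F ℝ where
  toFun := auxNorm ord e
  map_mul' x y := by
    have hr : 0 < (2 : ℝ) ^ ((e : ℝ)⁻¹) := by positivity
    unfold auxNorm
    by_cases hx : x = 0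
    · simp [hx]
    by_cases hy : y = 0
    · simp [hy]
    rw [if_neg hx, if_neg hy, if_neg (mul_ne_zero hx hy), hv.map_mul, ← zpow_add₀ hr.ne']
    have h1 := hv.ne_top x hx
    have h2 := hv.ne_top y hy
    lift ord x to ℤ using h1 with n
    lift ord y to ℤ using h2 with m
    congr 1
    rw [← WithTop.coe_add]
    simp only [WithTop.untopD_coe]
    ring
  nonneg' x := by
    unfold auxNorm
    split_ifs <;> positivity
  eq_zero' x := by
    unfold auxNorm
    split_ifs with h
    · simp [h]
    · simp only [h, iff_false]
      positivity
  add_le' x y := by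
    have h0 : ∀ z : F, 0 ≤ auxNorm ord e z := by
      intro z
      unfold auxNorm
      split_ifs <;> positivity
    rcases min_le_iff.1 (hv.min_le_add x y) with h | h
    · have := (aux_norm_le hv e he _ _).2 h
      linarith [h0 y]
    · have := (aux_norm_le hv e he _ _).2 h
      linarith [h0 x]

theorem aux_norm_Q2 {F : Type*} [Field F] [Algebra ℚ_[2] F] {ord : F → WithTop ℤ}
    (hv : IsDyadicOrd ord) (e : ℕ) (he : ord (2 : F) = ((e : ℤ) : WithTop ℤ)) (he0 : 0 < e)
    (q : ℚ_[2]) : auxNorm ord e (algebraMap ℚ_[2] F q) = ‖q‖ := by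
  by_cases hq : q = 0
  · simp [hq, auxNorm]
  · have h1 : algebraMap ℚ_[2] F q ≠ 0 := (map_ne_zero _).2 hq
    rw [auxNorm, if_neg h1, aux_Q2 hv e he q hq, WithTop.untopD_coe,
      Padic.norm_eq_zpow_neg_valuation hq, ← mul_neg, zpow_mul, zpow_natCast,
      ← Real.rpow_natCast, ← Real.rpow_mul (by norm_num), inv_mul_cancel₀ (by positivity)]
    simp

theorem aux_main {F : Type*} [Field F] [Algebra ℚ_[2] F] [FiniteDimensional ℚ_[2] F]
    {ord : F → WithTop ℤ} (hv : IsDyadicOrd ord)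
    (e : ℕ) (he : ord (2 : F) = ((e : ℤ) : WithTop ℤ)) (he0 : 0 < e)
    (ε w ρ : F) (hε : ord ε = 0) (hw : ord w = 0) (hρ : 0 ≤ ord ρ) :
    ∃ x y : F, x ^ 2 + w * x * y - ρ * y ^ 2 = ε := by
  letI : NormedField F := (auxAbs hv e he0).toNormedField
  have hnorm : ∀ x : F, ‖x‖ = auxNorm ord e x := fun x => rfl
  letI : NormedAlgebra ℚ_[2] F :=
    { (inferInstance : Algebra ℚ_[2] F) with
      norm_smul_le := fun q x => by
        rw [Algebra.smul_def, norm_mul, hnorm (algebraMap ℚ_[2] F q), aux_norm_Q2 hv e he he0] }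
  haveI : ProperSpace F := FiniteDimensional.proper ℚ_[2] F
  have hle : ∀ x y : F, ‖x‖ ≤ ‖y‖ ↔ ord y ≤ ord x := aux_norm_le hv e he0
  have h1 := aux_one hv
  have heq : ∀ x : F, ord x = 0 → ‖x‖ = 1 := by
    intro x hx
    rw [← norm_one (α := F)]
    exact le_antisymm ((hle _ _).2 (by rw [hx, h1])) ((hle _ _).2 (by rw [hx, h1]))
  refine aux_solve ?_ ?_ ε w ρ (heq _ hε) (heq _ hw) ?_
  · intro x y
    rw [le_max_iff, hle, hle]
    exact min_le_iff.1 (hv.min_le_add x y)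
  · rw [← norm_one (α := F), ← not_le, hle, he, h1]
    norm_cast
    omega
  · rw [← norm_one (α := F), hle, h1]
    exact hρ

end helpers

/-- if `ord a₁ = 0`, `ord a₂ = -2e` and `d(-a₁a₂) ≥ 2e`, then:
if `a₁a₂ ∈ -(Fˣ)²` the form `[a₁,a₂]` is isotropic, and if `a₁a₂ ∈ -Δ(Fˣ)²`
then `[a₁,a₂]` represents exactly the elements of even order. -/
theorem stmt8 {F : Type*} [Field F] [Algebra ℚ_[2] F] [FiniteDimensional ℚ_[2] F]
    (ord : F → WithTop ℤ) (hv : IsDyadicOrd ord)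
    (e : ℕ) (he : ord (2 : F) = ((e : ℤ) : WithTop ℤ))
    (Δ : F) (hΔu : ord Δ = 0) (hΔd : ddefect ord Δ = (2 * e : ℕ∞))
    (a₁ a₂ : F) (h₁ : a₁ ≠ 0) (h₂ : a₂ ≠ 0)
    (hR₁ : ord a₁ = 0) (hR₂ : ord a₂ = ((-(2 * (e : ℤ)) : ℤ) : WithTop ℤ))
    (hd : (2 * e : ℕ∞) ≤ ddefect ord (-(a₁ * a₂))) :
    ((∃ c : F, a₁ * a₂ = -(c ^ 2)) →
      ∃ x y : F, (x, y) ≠ (0, 0) ∧ a₁ * x ^ 2 + a₂ * y ^ 2 = 0) ∧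
    ((∃ c : F, c ≠ 0 ∧ a₁ * a₂ = -(Δ * c ^ 2)) →
      ∀ b : F, b ≠ 0 →
        ((∃ x y : F, a₁ * x ^ 2 + a₂ * y ^ 2 = b) ↔
          ∃ k : ℤ, ord b = ((2 * k : ℤ) : WithTop ℤ))) := by
  refine ⟨?_, ?_⟩
  · rintro ⟨c, hc⟩
    refine ⟨c, a₁, by simp [h₁], ?_⟩
    linear_combination a₁ * hc
  rintro ⟨c, hc0, hc⟩ b hb
  have he0 := aux_e_pos hv e he
  set v := auxVal hv with hvdef
  have hvo : ∀ x, ord x = v x := fun x => rfl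
  have hΔ0 : Δ ≠ 0 := by
    rintro rfl
    rw [hv.map_zero] at hΔu
    exact WithTop.top_ne_coe hΔu
  have h20 : (2 : F) ≠ 0 := by
    intro h
    rw [h, hv.map_zero] at he
    exact WithTop.top_ne_coe he
  have hinv : ∀ z, ord (Δ⁻¹ * z) = ord z := by
    intro z
    have := hv.map_mul Δ (Δ⁻¹ * z)
    rw [mul_inv_cancel_left₀ hΔ0, hΔu, zero_add] at this
    exact this.symm
  -- upper bound
  have hub : ∀ t : F, ord (Δ - t ^ 2) ≤ ((2 * e : ℤ) : WithTop ℤ) := by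
    intro t
    have h : WithTop.map Int.toNat (ord (Δ⁻¹ * (Δ - t ^ 2))) ≤ (2 * e : ℕ∞) := by
      rw [← hΔd]
      exact le_iSup (fun x : F => (WithTop.map Int.toNat (ord (Δ⁻¹ * (Δ - x ^ 2))) : ℕ∞)) t
    rw [hinv] at h
    cases hz : ord (Δ - t ^ 2) with
    | top =>
      rw [hz] at h
      exfalso
      have h' : (⊤ : ℕ∞) ≤ ((2 * e : ℕ) : ℕ∞) := by push_cast; exact h
      exact absurd h' (not_le.2 (ENat.natCast_lt_top _))
    | coe n =>
      rw [hz] at h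
      have h' : ((n.toNat : ℕ) : ℕ∞) ≤ ((2 * e : ℕ) : ℕ∞) := by push_cast; exact h
      rw [Nat.cast_le] at h'
      norm_cast
      push_cast
      omega
  -- attained
  obtain ⟨w, hwd⟩ : ∃ w : F, ((2 * e : ℤ) : WithTop ℤ) ≤ ord (Δ - w ^ 2) := by
    have hlt : ((2 * e - 1 : ℕ) : ℕ∞) < ddefect ord Δ := by
      rw [hΔd]
      have : ((2 * e - 1 : ℕ) : ℕ∞) < ((2 * e : ℕ) : ℕ∞) := by
        rw [Nat.cast_lt]; omega
      push_cast at this ⊢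
      exact this
    obtain ⟨w, hw⟩ := lt_iSup_iff.1 hlt
    refine ⟨w, ?_⟩
    rw [hinv] at hw
    cases hz : ord (Δ - w ^ 2) with
    | top => exact le_top
    | coe n =>
      rw [hz] at hw
      have h' : ((2 * e - 1 : ℕ) : ℕ∞) < ((n.toNat : ℕ) : ℕ∞) := hw
      rw [Nat.cast_lt] at h'
      norm_cast
      push_cast
      omega
  have hsq : ∀ z : F, z ≠ 0 → ∃ n : ℤ, ord z = n ∧ ord (z ^ 2) = ((2 * n : ℤ) : WithTop ℤ) := by
    intro z hz
    obtain ⟨n, hn⟩ := WithTop.ne_top_iff_exists.1 (hv.ne_top z hz)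
    refine ⟨n, hn.symm, ?_⟩
    rw [pow_two, hv.map_mul, ← hn]
    norm_cast
    congr 1
    ring
  have hw2 : ord (w ^ 2) = 0 := by
    have h : v (Δ - (Δ - w ^ 2)) = v Δ := by
      apply v.map_sub_eq_of_lt_left
      rw [← hvo, ← hvo, hΔu]
      refine lt_of_lt_of_le ?_ hwd
      norm_cast
      omega
    rw [sub_sub_cancel] at h
    rw [hvo, h, ← hvo, hΔu]
  have hw0 : w ≠ 0 := by
    rintro rfl
    rw [zero_pow two_ne_zero, hv.map_zero] at hw2
    exact WithTop.top_ne_coe hw2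
  have hw : ord w = 0 := by
    obtain ⟨n, hn, hn2⟩ := hsq w hw0
    rw [hn2] at hw2
    rw [hn]
    norm_cast at hw2 ⊢
    omega
  constructor
  · rintro ⟨x, y, hxy⟩
    have hN : (a₁ * x) ^ 2 - Δ * (c * y) ^ 2 = a₁ * b := by
      linear_combination a₁ * hxy - y ^ 2 * hc
    have hob : ord b = ord (a₁ * b) := by rw [hv.map_mul, hR₁, zero_add]
    rw [hob, ← hN]
    have hN0 : (a₁ * x) ^ 2 - Δ * (c * y) ^ 2 ≠ 0 := by
      rw [hN]; exact mul_ne_zero h₁ hb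
    generalize a₁ * x = u at hN0
    generalize c * y = s at hN0
    by_cases hs : s = 0
    · subst hs
      have hu : u ≠ 0 := by rintro rfl; simp at hN0
      obtain ⟨n, -, hn⟩ := hsq u hu
      exact ⟨n, by simpa using hn⟩
    obtain ⟨m, -, hm⟩ := hsq s hs
    set t := u / s with ht
    have e1 : u ^ 2 - Δ * s ^ 2 = s ^ 2 * (t ^ 2 - Δ) := by
      rw [ht]; field_simp
    have key : ∃ k : ℤ, ord (t ^ 2 - Δ) = ((2 * k : ℤ) : WithTop ℤ) := by
      have hub' := hub t
      rw [hvo, v.map_sub_swap, ← hvo] at hub'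
      have hq : ((2 * e : ℤ) : WithTop ℤ) ≤ ord (w ^ 2 - Δ) := by
        rw [hvo, v.map_sub_swap]; exact hwd
      have e2 : t ^ 2 - Δ = (t - w) ^ 2 + (2 * w * (t - w) + (w ^ 2 - Δ)) := by ring
      have hmul : ord (2 * w * (t - w)) = ((e : ℤ) : WithTop ℤ) + ord (t - w) := by
        rw [hv.map_mul, hv.map_mul, he, hw, add_zero]
      by_cases hz : t - w = 0
      · refine ⟨e, le_antisymm hub' ?_⟩
        rw [sub_eq_zero.1 hz]; exact hq
      obtain ⟨n, hn, hn2⟩ := hsq _ hz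
      rw [hn] at hmul
      by_cases hne : n < e
      · refine ⟨n, ?_⟩
        rw [e2, hvo, v.map_add_eq_of_lt_left, ← hvo, hn2]
        apply v.map_lt_add
        · rw [← hvo, ← hvo, hn2, hmul]
          norm_cast
          omega
        · rw [← hvo, ← hvo, hn2]
          refine lt_of_lt_of_le ?_ hq
          norm_cast
          omega
      · refine ⟨e, le_antisymm hub' ?_⟩
        rw [e2, hvo]
        apply v.map_le_add
        · rw [← hvo, hn2]
          norm_cast
          omega
        · apply v.map_le_add
          · rw [← hvo, hmul]
            norm_cast
            omega
          · exact hq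
    obtain ⟨k, hk⟩ := key
    refine ⟨m + k, ?_⟩
    rw [e1, hv.map_mul, hm, hk]
    norm_cast
    congr 1
    ring
  · rintro ⟨k, hk⟩
    obtain ⟨p, hp⟩ := hv.surj k
    have hp0 : p ≠ 0 := by
      rintro rfl
      rw [hv.map_zero] at hp
      exact WithTop.top_ne_coe hp
    obtain ⟨n, hn, hn2⟩ := hsq p hp0
    have hnk : n = k := by
      rw [hp] at hn
      exact_mod_cast hn.symm
    subst hnk
    have hε : ord (a₁ * b / p ^ 2) = 0 := by
      have h := hv.map_mul (a₁ * b / p ^ 2) (p ^ 2)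
      rw [div_mul_cancel₀ _ (pow_ne_zero _ hp0), hv.map_mul, hR₁, hk, hn2, zero_add] at h
      have ht := hv.ne_top (a₁ * b / p ^ 2)
        (div_ne_zero (mul_ne_zero h₁ hb) (pow_ne_zero _ hp0))
      lift ord (a₁ * b / p ^ 2) to ℤ using ht with j
      norm_cast at h ⊢
      omega
    have hρ : 0 ≤ ord ((Δ - w ^ 2) / 2 ^ 2) := by
      have h := hv.map_mul ((Δ - w ^ 2) / 2 ^ 2) (2 ^ 2)
      rw [div_mul_cancel₀ _ (pow_ne_zero _ h20), pow_two (2 : F), hv.map_mul 2 2, he] at h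
      rw [h, ← pow_two] at hwd
      cases hz : ord ((Δ - w ^ 2) / 2 ^ 2) with
      | top => exact le_top
      | coe j =>
        rw [hz] at hwd
        norm_cast at hwd ⊢
        push_cast at hwd
        omega
    obtain ⟨x, y, hxy⟩ := aux_main hv e he he0 _ w _ hε hw hρ
    refine ⟨p * (x + w * y / 2) / a₁, p * (y / 2) / c, ?_⟩
    have hb' : a₁ * b = p ^ 2 * (x ^ 2 + w * x * y - (Δ - w ^ 2) / 2 ^ 2 * y ^ 2) := by
      rw [hxy]; field_simp
    apply mul_left_cancel₀ h₁
    rw [hb']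
    have e3 : a₁ * (a₁ * (p * (x + w * y / 2) / a₁) ^ 2 + a₂ * (p * (y / 2) / c) ^ 2)
        = (p * (x + w * y / 2)) ^ 2 + (a₁ * a₂) * (p * (y / 2)) ^ 2 / c ^ 2 := by
      field_simp
    rw [e3, hc]
    field_simp
    ring
end
end

section
/- Let $F$ be a dyadic local field. For a unit $\varepsilon \in \mathcal{O}^\times$, the value $d(\varepsilon) = \mathrm{ord}(\mathfrak{d}(\varepsilon))$ lies in the set $\{1, 3, 5, \ldots, 2e-1, 2e, \infty\}$; in particular, if $d(\varepsilon)$ is even and finite then $d(\varepsilon) = 2e$. -/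
noncomputable section

namespace IsDyadicOrd

open Polynomial

variable {F : Type*} [Field F] [Algebra ℚ_[2] F] {ord : F → WithTop ℤ}

theorem map_one (hv : IsDyadicOrd ord) : ord 1 = 0 := by
  have h := hv.map_mul 1 1
  have h1 := hv.ne_top 1 one_ne_zero
  rw [mul_one] at h
  lift ord 1 to ℤ using h1 with n
  norm_cast at h ⊢
  omega

/-- The Mathlib additive valuation attached to `ord`. -/
def addVal (hv : IsDyadicOrd ord) : AddValuation F (WithTop ℤ) :=
  AddValuation.of ord hv.map_zero hv.map_one hv.min_le_add hv.map_mul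

theorem addVal_apply (hv : IsDyadicOrd ord) (x : F) : hv.addVal x = ord x := rfl

theorem map_neg (hv : IsDyadicOrd ord) (x : F) : ord (-x) = ord x := hv.addVal.map_neg x

theorem map_pow (hv : IsDyadicOrd ord) (x : F) (n : ℕ) : ord (x ^ n) = n • ord x :=
  hv.addVal.map_pow x n

theorem mul_inv (hv : IsDyadicOrd ord) (x : F) (hx : x ≠ 0) : ord x + ord x⁻¹ = 0 := by
  rw [← hv.map_mul, mul_inv_cancel₀ hx, hv.map_one]

/-- The ring of integers. -/
def V (hv : IsDyadicOrd ord) : ValuationSubring F where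
  carrier := {x | 0 ≤ ord x}
  mul_mem' := by
    intro a b ha hb
    simp only [Set.mem_ofPred_eq] at *
    rw [hv.map_mul]
    exact add_nonneg ha hb
  one_mem' := by simp [hv.map_one]
  add_mem' := by
    intro a b ha hb
    exact le_trans (le_min ha hb) (hv.min_le_add a b)
  zero_mem' := by simp [hv.map_zero]
  neg_mem' := by
    intro a ha
    simpa [hv.map_neg] using ha
  mem_or_inv_mem' := by
    intro x
    by_cases hx : x = 0
    · left; simp [hx, hv.map_zero]
    · have h := hv.mul_inv x hx
      have h1 := hv.ne_top x hx
      have h2 := hv.ne_top x⁻¹ (inv_ne_zero hx)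
      simp only [Set.mem_ofPred_eq]
      lift ord x to ℤ using h1 with n
      lift ord x⁻¹ to ℤ using h2 with m
      norm_cast at h ⊢
      omega

theorem mem_V (hv : IsDyadicOrd ord) (x : F) : x ∈ hv.V ↔ 0 ≤ ord x := Iff.rfl

theorem residue_eq_zero (hv : IsDyadicOrd ord) (x : hv.V) :
    IsLocalRing.residue hv.V x = 0 ↔ 0 < ord (x : F) := by
  rw [IsLocalRing.residue_eq_zero_iff, IsLocalRing.mem_maximalIdeal, mem_nonunits_iff]
  have hx0 : 0 ≤ ord (x : F) := x.2
  constructor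
  · intro h
    refine lt_of_le_of_ne hx0 fun h0 => h ?_
    have hx : (x : F) ≠ 0 := by
      intro hx
      rw [hx, hv.map_zero] at h0
      exact absurd h0 (by simp)
    have hi := hv.mul_inv x hx
    rw [← h0, zero_add] at hi
    refine IsUnit.of_mul_eq_one ⟨(x : F)⁻¹, hi.ge⟩ ?_
    ext
    simp [hx]
  · intro h hu
    obtain ⟨y, hy⟩ := hu.exists_right_inv
    have hy' : (x : F) * (y : F) = 1 := by
      have := congrArg (Subtype.val) hy
      simpa using this
    have h1 := hv.map_mul x y
    rw [hy', hv.map_one] at h1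
    have : 0 < ord (x : F) + ord (y : F) := add_pos_of_pos_of_nonneg h y.2
    rw [← h1] at this
    exact lt_irrefl _ this

theorem padicInt_mem (hv : IsDyadicOrd ord) (h2 : 0 < ord (2 : F)) (a : ℤ_[2]) :
    algebraMap ℚ_[2] F (a : ℚ_[2]) ∈ hv.V := by
  rw [mem_V]
  by_cases ha : a = 0
  · simp [ha, hv.map_zero]
  · have hs := congrArg (fun z : ℤ_[2] => algebraMap ℚ_[2] F (z : ℚ_[2])) (PadicInt.unitCoeff_spec ha)
    simp only [PadicInt.coe_mul, PadicInt.coe_pow, _root_.map_mul, _root_.map_pow] at hs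
    rw [hs, hv.map_mul, hv.map_pow, hv.compat]
    · rw [zero_add]
      refine nsmul_nonneg ?_ _
      have h22 : algebraMap ℚ_[2] F (((2 : ℕ) : ℤ_[2]) : ℚ_[2]) = 2 := by
        rw [PadicInt.coe_natCast, map_natCast, Nat.cast_ofNat]
      rw [h22]
      exact h2.le
    · exact PadicInt.coe_ne_zero.2 (Units.ne_zero _)
    · have h := PadicInt.valuation_coe (PadicInt.unitCoeff ha : ℤ_[2])
      rw [h]
      have hu : ‖((PadicInt.unitCoeff ha : ℤ_[2]))‖ = 1 := PadicInt.norm_units _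
      rw [PadicInt.norm_eq_zpow_neg_valuation (Units.ne_zero _)] at hu
      have := (zpow_eq_one_iff_right₀ (a := (2 : ℝ)) (by norm_num) (by norm_num)).1 (by exact_mod_cast hu)
      simpa using this

/-- The structural map from the 2-adic integers to the ring of integers. -/
def phi (hv : IsDyadicOrd ord) (h2 : 0 < ord (2 : F)) : ℤ_[2] →+* hv.V :=
  ((algebraMap ℚ_[2] F).comp (PadicInt.Coe.ringHom (p := 2))).codRestrict hv.V.toSubring
    (fun a => hv.padicInt_mem h2 a)

theorem phi_coe (hv : IsDyadicOrd ord) (h2 : 0 < ord (2 : F)) (a : ℤ_[2]) :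
    ((hv.phi h2 a : hv.V) : F) = algebraMap ℚ_[2] F (a : ℚ_[2]) := rfl

theorem two_res (hv : IsDyadicOrd ord) (h2 : 0 < ord (2 : F)) :
    (2 : IsLocalRing.ResidueField hv.V) = 0 := by
  have : IsLocalRing.residue hv.V 2 = 0 := (hv.residue_eq_zero 2).2 h2
  exact (map_ofNat (IsLocalRing.residue hv.V) 2).symm.trans this

theorem exists_sqrt [FiniteDimensional ℚ_[2] F] (hv : IsDyadicOrd ord) (h2 : 0 < ord (2 : F))
    (x : F) (hx : 0 ≤ ord x) : ∃ y : F, 0 ≤ ord y ∧ 0 < ord (x - y ^ 2) := by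
  let k := IsLocalRing.ResidueField hv.V
  have : CharP k 2 := CharTwo.of_one_ne_zero_of_two_eq_zero one_ne_zero (hv.two_res h2)
  let : Algebra (ZMod 2) k := ZMod.algebra k 2
  have hcomp : (algebraMap (ZMod 2) k).comp (PadicInt.toZMod (p := 2)) =
      (IsLocalRing.residue hv.V).comp (hv.phi h2) := by
    ext a
    have ha := PadicInt.toZMod_spec (p := 2) a
    rw [PadicInt.maximalIdeal_eq_span_p, Ideal.mem_span_singleton] at ha
    obtain ⟨b, hb⟩ := ha
    have hb2 := congrArg ((IsLocalRing.residue hv.V).comp (hv.phi h2)) hb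
    rw [_root_.map_mul, map_natCast, Nat.cast_ofNat, show (2 : IsLocalRing.ResidueField hv.V) = 0 from
      hv.two_res h2, zero_mul, map_sub, sub_eq_zero] at hb2
    rw [hb2, RingHom.comp_apply]
    generalize PadicInt.toZMod a = c
    rw [ZMod.cast_eq_val, map_natCast]
    conv_lhs => rw [← ZMod.natCast_zmod_val c]
    rw [map_natCast]
  have : Algebra.IsAlgebraic (ZMod 2) k := by
    refine ⟨fun t => ?_⟩
    obtain ⟨t, rfl⟩ := IsLocalRing.residue_surjective t
    have hal : IsAlgebraic ℚ_[2] (t : F) := Algebra.IsAlgebraic.isAlgebraic _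
    obtain ⟨p, hp0, hp⟩ := hal
    let : NormalizedGCDMonoid ℤ_[2] := Classical.choice inferInstance
    let q := (IsLocalization.integerNormalization (nonZeroDivisors ℤ_[2]) p)
    have hq : eval₂ ((algebraMap ℚ_[2] F).comp (algebraMap ℤ_[2] ℚ_[2])) (t : F) q = 0 :=
      IsLocalization.integerNormalization_eval₂_eq_zero _ _ _ hp
    have hq0 : q ≠ 0 := by
      intro h
      exact hp0 (IsFractionRing.integerNormalization_eq_zero_iff.1 h)
    have hqp := eval₂_primPart_eq_zero (p := q) (f := (algebraMap ℚ_[2] F).comp (algebraMap ℤ_[2] ℚ_[2]))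
      (s := (t : F)) ((algebraMap ℚ_[2] F).injective.comp (IsFractionRing.injective ℤ_[2] ℚ_[2])) hq0 hq
    refine ⟨q.primPart.map (PadicInt.toZMod (p := 2)), ?_, ?_⟩
    · intro h0
      have hd : C (2 : ℤ_[2]) ∣ q.primPart := by
        rw [C_dvd_iff_dvd_coeff]
        intro i
        have hi := congrArg (fun r => coeff r i) h0
        simp only [coeff_map, coeff_zero] at hi
        have : q.primPart.coeff i ∈ RingHom.ker (PadicInt.toZMod (p := 2)) := hi
        rw [PadicInt.ker_toZMod, PadicInt.maximalIdeal_eq_span_p, Ideal.mem_span_singleton] at this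
        simpa using this
      have hu := isPrimitive_iff_isUnit_of_C_dvd.1 q.isPrimitive_primPart _ hd
      exact PadicInt.prime_p (p := 2) |>.not_isUnit (by simpa using hu)
    · rw [aeval_def, eval₂_map, hcomp, ← hom_eval₂]
      have : eval₂ (hv.phi h2) t q.primPart = 0 := by
        apply Subtype.val_injective
        change hv.V.subtype _ = hv.V.subtype 0
        rw [hom_eval₂, _root_.map_zero]
        exact hqp
      rw [this, _root_.map_zero]
  have : PerfectField k := Algebra.IsAlgebraic.perfectField (ZMod 2)
  have : PerfectRing k 2 := inferInstance
  obtain ⟨y, hy⟩ := surjective_frobenius k 2 (IsLocalRing.residue hv.V ⟨x, hx⟩)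
  obtain ⟨y, rfl⟩ := IsLocalRing.residue_surjective y
  refine ⟨y, y.2, ?_⟩
  have := (hv.residue_eq_zero (⟨x, hx⟩ - y ^ 2)).1 (by
    rw [map_sub, ← hy, frobenius_def, _root_.map_pow, sub_self])
  simpa using this

theorem improve_even [FiniteDimensional ℚ_[2] F] (hv : IsDyadicOrd ord)
    (e : ℕ) (he : ord (2 : F) = ((e : ℤ) : WithTop ℤ)) (ε x : F) (hx : 0 ≤ ord x) (k : ℕ)
    (hk : k < e) (h : ord (ε - x ^ 2) = ((2 * k : ℤ) : WithTop ℤ)) :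
    ∃ z, ord (ε - x ^ 2) < ord (ε - z ^ 2) := by
  have h2 : 0 < ord (2 : F) := by rw [he]; norm_cast; omega
  obtain ⟨π, hπ⟩ := hv.surj k
  have hπ0 : π ≠ 0 := by
    rintro rfl
    rw [hv.map_zero] at hπ
    exact absurd hπ (by simp)
  have hu : ord ((ε - x ^ 2) / π ^ 2) = 0 := by
    have h3 := hv.map_mul ((ε - x ^ 2) / π ^ 2) (π ^ 2)
    rw [div_mul_cancel₀ _ (pow_ne_zero 2 hπ0), h, hv.map_pow, hπ] at h3
    have h4 : ord ((ε - x ^ 2) / π ^ 2) ≠ ⊤ := by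
      intro h4
      rw [h4] at h3
      exact WithTop.coe_ne_top h3
    lift ord ((ε - x ^ 2) / π ^ 2) to ℤ using h4 with n
    norm_cast at h3 ⊢
    simp at h3
    omega
  obtain ⟨y, hy0, hy⟩ := hv.exists_sqrt h2 _ hu.ge
  refine ⟨x + π * y, ?_⟩
  have hid : ε - (x + π * y) ^ 2 =
      π ^ 2 * ((ε - x ^ 2) / π ^ 2 - y ^ 2) + -(2 * π * (x * y)) := by
    field_simp
    ring
  rw [hid, h]
  refine lt_of_lt_of_le (lt_min ?_ ?_) (hv.min_le_add _ _)
  · rw [hv.map_mul, hv.map_pow, hπ]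
    generalize ord ((ε - x ^ 2) / π ^ 2 - y ^ 2) = w at hy
    induction w with
    | top => exact WithTop.coe_lt_top _
    | coe w =>
      norm_cast at hy ⊢
      simp
      omega
  · rw [hv.map_neg, hv.map_mul, hv.map_mul 2 π, hπ, he]
    have hxy : 0 ≤ ord (x * y) := by rw [hv.map_mul]; exact add_nonneg hx hy0
    generalize ord (x * y) = w at hxy
    induction w with
    | top => exact WithTop.coe_lt_top _
    | coe w =>
      norm_cast at hxy ⊢
      omega

theorem improve_big (hv : IsDyadicOrd ord)
    (e : ℕ) (he : ord (2 : F) = ((e : ℤ) : WithTop ℤ)) (ε x : F) (hx : ord x = 0) (N : ℕ)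
    (hN : 2 * e < N) (h : ord (ε - x ^ 2) = ((N : ℤ) : WithTop ℤ)) :
    ∃ z, ord (ε - x ^ 2) < ord (ε - z ^ 2) := by
  have hx0 : x ≠ 0 := by
    rintro rfl
    rw [hv.map_zero] at hx
    exact absurd hx (by simp)
  have h20 : (2 : F) ≠ 0 := by
    intro h
    rw [h, hv.map_zero] at he
    exact absurd he (by simp)
  refine ⟨x + (ε - x ^ 2) / (2 * x), ?_⟩
  have hid : ε - (x + (ε - x ^ 2) / (2 * x)) ^ 2 = -((ε - x ^ 2) / (2 * x)) ^ 2 := by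
    field_simp
    ring
  rw [hid, hv.map_neg, hv.map_pow, h]
  have h3 := hv.map_mul ((ε - x ^ 2) / (2 * x)) (2 * x)
  rw [div_mul_cancel₀ _ (mul_ne_zero h20 hx0), h, hv.map_mul 2 x, he, hx] at h3
  generalize ord ((ε - x ^ 2) / (2 * x)) = w at h3
  induction w with
  | top => exact absurd h3 WithTop.coe_ne_top
  | coe w =>
    norm_cast at h3 ⊢
    simp
    omega

end IsDyadicOrd

/-- for a unit `ε`, `d(ε) ∈ {1,3,…,2e-1, 2e, ∞}`; in particular
if `d(ε)` is even and finite then `d(ε) = 2e`. -/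
theorem stmt13 {F : Type*} [Field F] [Algebra ℚ_[2] F] [FiniteDimensional ℚ_[2] F]
    (ord : F → WithTop ℤ) (hv : IsDyadicOrd ord)
    (e : ℕ) (he : ord (2 : F) = ((e : ℤ) : WithTop ℤ))
    (ε : F) (hε : ord ε = 0) :
    (ddefect ord ε = ⊤ ∨ ddefect ord ε = (2 * e : ℕ∞) ∨
      ∃ k : ℕ, ddefect ord ε = (2 * k + 1 : ℕ∞) ∧ 2 * k + 1 ≤ 2 * e - 1) ∧
    (∀ k : ℕ, ddefect ord ε = (2 * k : ℕ∞) → ddefect ord ε = (2 * e : ℕ∞)) := by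
  have hε0 : ε ≠ 0 := by
    rintro rfl
    rw [hv.map_zero] at hε
    exact absurd hε (by simp)
  have hord : ∀ x, ord (ε⁻¹ * (ε - x ^ 2)) = ord (ε - x ^ 2) := by
    intro x
    have h := hv.mul_inv ε hε0
    rw [hε, zero_add] at h
    rw [hv.map_mul, h, zero_add]
  by_cases htop : ddefect ord ε = ⊤
  · refine ⟨Or.inl htop, fun k hk => ?_⟩
    rw [htop] at hk
    exact absurd hk.symm (ENat.natCast_ne_top (2 * k))
  obtain ⟨N, hN⟩ := ENat.ne_top_iff_exists.1 htop
  have hle : ∀ x, WithTop.map Int.toNat (ord (ε - x ^ 2)) ≤ (N : ℕ∞) := by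
    intro x
    rw [hN, ← hord]
    exact le_iSup (fun x : F => (WithTop.map Int.toNat (ord (ε⁻¹ * (ε - x ^ 2))) : ℕ∞)) x
  have hle' : ∀ x, ord (ε - x ^ 2) ≤ ((N : ℤ) : WithTop ℤ) := by
    intro x
    have h := hle x
    generalize ord (ε - x ^ 2) = w at h
    induction w with
    | top => exact absurd (top_le_iff.1 h) (ENat.natCast_ne_top N)
    | coe w =>
      have h' : w.toNat ≤ N := by
        rw [WithTop.map_coe] at h
        exact ENat.natCast_le_natCast.1 h
      norm_cast
      omega
  have hex : ∃ x, 0 ≤ ord x ∧ ord (ε - x ^ 2) = ((N : ℤ) : WithTop ℤ) ∧ (0 < N → ord x = 0) := by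
    rcases Nat.eq_zero_or_pos N with h0 | hpos
    · refine ⟨0, by simp [hv.map_zero], by simp [hε, h0], fun h => by omega⟩
    · have : ∃ x, ((N : ℤ) : WithTop ℤ) ≤ ord (ε - x ^ 2) := by
        by_contra! hcon
        have : ddefect ord ε ≤ ((N - 1 : ℕ) : ℕ∞) := by
          refine iSup_le fun x => ?_
          rw [hord]
          have h := hcon x
          generalize ord (ε - x ^ 2) = w at h
          induction w with
          | top => exact absurd h (by simp)
          | coe w =>
            rw [WithTop.map_coe]
            refine ENat.natCast_le_natCast.2 ?_
            norm_cast at h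
            omega
        rw [← hN] at this
        have := ENat.natCast_le_natCast.1 this
        omega
      obtain ⟨x, hx⟩ := this
      have hxN := le_antisymm (hle' x) hx
      have hx0 : ord x = 0 := by
        have h1 : ord (x ^ 2) = ord ε := by
          have : x ^ 2 = ε - (ε - x ^ 2) := by ring
          rw [this]
          refine hv.addVal.map_sub_eq_of_lt_left ?_
          rw [hv.addVal_apply, hv.addVal_apply, hε, hxN]
          exact_mod_cast hpos
        rw [hv.map_pow, hε] at h1
        generalize ord x = w at h1
        induction w with
        | top => exact absurd h1 (by simp [two_nsmul])
        | coe w =>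
          norm_cast at h1 ⊢
          simpa using h1
      exact ⟨x, hx0.ge, hxN, fun _ => hx0⟩
  obtain ⟨x, hx0, hxN, hxu⟩ := hex
  have hno : ¬ ∃ z, ord (ε - x ^ 2) < ord (ε - z ^ 2) := by
    rintro ⟨z, hz⟩
    rw [hxN] at hz
    exact absurd (hle' z) (not_le.2 hz)
  have hN2 : N ≤ 2 * e := by
    by_contra! hcon
    exact hno (hv.improve_big e he ε x (hxu (by omega)) N hcon hxN)
  have hev : ∀ k, N = 2 * k → N = 2 * e := by
    intro k hk
    by_contra hne
    exact hno (hv.improve_even e he ε x hx0 k (by omega) (by rw [hxN, hk]; push_cast; rfl))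
  rw [← hN]
  refine ⟨Or.inr ?_, ?_⟩
  · rcases Nat.even_or_odd' N with ⟨k, hk | hk⟩
    · left
      exact_mod_cast hev k hk
    · right
      exact ⟨k, by exact_mod_cast hk, by omega⟩
  · intro k hk
    exact_mod_cast hev k (by exact_mod_cast hk)
end
end
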